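/- arXiv:2203.00711 — 2 statements merged into one kernel-verified Lean document; each statement's English description precedes it below -/
import Mathlib

section
/- Assume α > 1, both λ and β are nondecreasing on [t₀,∞), b(t) > β'(t) + β(t)/t (equivalently w(t) > 0) for every t ≥ t₀, there exists ε ∈ (0, α−1) with (α−3)·w(t) − t·w'(t) ≥ ε·b(t) for every t ≥ t₀, ∫_{t₀}^{∞} [ λ'(t)²·t³·β(t)²/λ(t)⁴ − λ'(t)·t²·b(t)/(2·λ(t)²) ]_+ dt < +∞ (where [·]_+ denotes the positive part), and there exists C > 0 with (d/dt)(t²·b(t)) ≤ C·t·b(t) for every t ≥ t₀. Then t²·b(t)·(Φ_{λ(t)}(x(t)) − Φ*) → 0 as t → +∞, i.e. Φ_{λ(t)}(x(t)) − Φ* = o(1/(t²·b(t))). -/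
open Set MeasureTheory Filter Real

noncomputable section

/-- Convexity for extended-real-valued functions. -/
def EConvexOn {H : Type*} [NormedAddCommGroup H] [NormedSpace ℝ H] (f : H → EReal) : Prop :=
  ∀ x y : H, ∀ a c : ℝ, 0 ≤ a → 0 ≤ c → a + c = 1 →
    f (a • x + c • y) ≤ (a : EReal) * f x + (c : EReal) * f y

/-- `p` is the proximal point of `f` with parameter `l` at `x`, i.e. the (unique) minimizer of
`y ↦ f y + ‖x - y‖² / (2l)`. -/
def IsProxPt {H : Type*} [NormedAddCommGroup H] [InnerProductSpace ℝ H]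
    (f : H → EReal) (l : ℝ) (x p : H) : Prop :=
  ∀ y : H, f p + ((‖x - p‖ ^ 2 / (2 * l) : ℝ) : EReal)
      ≤ f y + ((‖x - y‖ ^ 2 / (2 * l) : ℝ) : EReal)

/-- The Moreau envelope of `f` with parameter `l` (as a real number). -/
def moreau {H : Type*} [NormedAddCommGroup H] [InnerProductSpace ℝ H]
    (f : H → EReal) (l : ℝ) (x : H) : ℝ :=
  (⨅ y : H, f y + ((‖x - y‖ ^ 2 / (2 * l) : ℝ) : EReal)).toReal

/-!
Write `c = α - 1 - ε / 2`. The Lyapunov function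
`(t² w + (ε / 2) t β) (Φ_λ(x) - Φ*) + ‖c (x - z) + t (ẋ + β ∇Φ_λ(x))‖² / 2 + (c ε / 4) ‖x - z‖²`
decreases at rate at least `(ε / 2) (t b (Φ_λ(x) - Φ*) + t ‖ẋ‖²)`. Hence `x` stays bounded and that
rate is integrable.

The energy `W = t² b (Φ_λ(x) - Φ*) + t² ‖ẋ‖² / 2` is nonnegative and `W / t` is integrable, so it is
enough that `W` converges, and for this that `W'` has an integrable upper bound. The delicate term
of `W'` is `-t² β ⟪(d/dt) ∇Φ_λ(x), ẋ⟫`: since `∇Φ_λ(x)` is a subgradient of `Φ` at the proximal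
point, monotonicity along the trajectory bounds the inner product below by
`-(λ' / λ) ‖∇Φ_λ(x)‖ ‖ẋ‖`.
After Young's inequality the part in `‖∇Φ_λ(x)‖²` combines with the decrease of `Φ_λ` in `λ` into
the integrand of the hypothesis on `λ`, times `‖λ ∇Φ_λ(x)‖² ≤ ‖x - z‖²`.
-/

open scoped InnerProductSpace Topology

section ProximalPoint

variable {H : Type*} [NormedAddCommGroup H] [InnerProductSpace ℝ H]
  {Φ : H → EReal} {l : ℝ} {x p y : H}

theorem IsProxPt.ne_top (hp : IsProxPt Φ l x p) (hy : Φ y ≠ ⊤) : Φ p ≠ ⊤ := by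
  intro hp_top
  have hle := hp y
  rw [hp_top, EReal.top_add_coe, top_le_iff] at hle
  exact (EReal.add_lt_top hy (EReal.coe_ne_top _)).ne hle

theorem IsProxPt.moreau_eq (hp : IsProxPt Φ l x p) (hbot : Φ p ≠ ⊥) (htop : Φ p ≠ ⊤) :
    moreau Φ l x = (Φ p).toReal + ‖x - p‖ ^ 2 / (2 * l) := by
  have hinf : (⨅ y : H, Φ y + ((‖x - y‖ ^ 2 / (2 * l) : ℝ) : EReal))
      = Φ p + ((‖x - p‖ ^ 2 / (2 * l) : ℝ) : EReal) :=
    le_antisymm (iInf_le _ p) (le_iInf hp)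
  rw [moreau, hinf, EReal.toReal_add htop hbot (EReal.coe_ne_top _) (EReal.coe_ne_bot _),
    EReal.toReal_coe]

theorem IsProxPt.add_inner_le_add_mul (hp : IsProxPt Φ l x p) (hΦ : EConvexOn Φ)
    (hbot : ∀ y, Φ y ≠ ⊥) (hy : Φ y ≠ ⊤) {θ : ℝ} (hθ : θ ∈ Ioc 0 1) :
    (Φ p).toReal + ⟪l⁻¹ • (x - p), y - p⟫_ℝ
      ≤ (Φ y).toReal + θ * (‖y - p‖ ^ 2 / (2 * l)) := by
  obtain ⟨hθ0, hθ1⟩ := hθ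
  have hmin := (hp ((1 - θ) • p + θ • y)).trans
    (add_le_add_left (hΦ p y (1 - θ) θ (by linarith) hθ0.le (by ring)) _)
  rw [← EReal.coe_toReal (hp.ne_top hy) (hbot p), ← EReal.coe_toReal hy (hbot y)] at hmin
  norm_cast at hmin
  have hdir : x - ((1 - θ) • p + θ • y) = (x - p) - θ • (y - p) := by module
  have hquad : ‖x - ((1 - θ) • p + θ • y)‖ ^ 2 / (2 * l) = ‖x - p‖ ^ 2 / (2 * l)
      - θ * ⟪l⁻¹ • (x - p), y - p⟫_ℝ + θ * (θ * (‖y - p‖ ^ 2 / (2 * l))) := by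
    rw [hdir, norm_sub_sq_real, norm_smul, inner_smul_right, real_inner_smul_left,
      Real.norm_of_nonneg hθ0.le]
    ring
  rw [hquad] at hmin
  refine le_of_mul_le_mul_left ?_ hθ0
  linarith

theorem IsProxPt.add_inner_le (hp : IsProxPt Φ l x p) (hΦ : EConvexOn Φ)
    (hbot : ∀ y, Φ y ≠ ⊥) (hy : Φ y ≠ ⊤) :
    (Φ p).toReal + ⟪l⁻¹ • (x - p), y - p⟫_ℝ ≤ (Φ y).toReal := by
  have hlim : Tendsto (fun θ : ℝ => (Φ y).toReal + θ * (‖y - p‖ ^ 2 / (2 * l))) (𝓝[>] 0)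
      (𝓝 ((Φ y).toReal + 0 * (‖y - p‖ ^ 2 / (2 * l)))) :=
    Tendsto.mono_left (Continuous.tendsto (by fun_prop) 0) nhdsWithin_le_nhds
  rw [zero_mul, add_zero] at hlim
  refine ge_of_tendsto hlim ?_
  filter_upwards [Ioc_mem_nhdsGT one_pos] with θ hθ
  exact hp.add_inner_le_add_mul hΦ hbot hy hθ

end ProximalPoint

section SubgradientCurve

variable {H : Type*} [NormedAddCommGroup H] [InnerProductSpace ℝ H]
  {G p : ℝ → H} {g q : H} {t : ℝ}

theorem inner_deriv_nonneg_of_eventually_inner_sub_nonneg (hG : HasDerivAt G g t)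
    (hp : HasDerivAt p q t) (hmono : ∀ᶠ s in 𝓝 t, 0 ≤ ⟪G s - G t, p s - p t⟫_ℝ) :
    0 ≤ ⟪g, q⟫_ℝ := by
  have hslope := hG.tendsto_slope.inner (𝕜 := ℝ) hp.tendsto_slope
  refine ge_of_tendsto hslope ?_
  filter_upwards [nhdsWithin_le_nhds hmono] with s hs
  rw [slope_def_module, slope_def_module, real_inner_smul_left, real_inner_smul_right, ← mul_assoc]
  exact mul_nonneg (mul_self_nonneg _) hs

theorem hasDerivAt_of_eventually_subgradient {f : ℝ → ℝ} (hG : ContinuousAt G t)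
    (hp : HasDerivAt p q t) (hleft : ∀ᶠ s in 𝓝 t, f t + ⟪G t, p s - p t⟫_ℝ ≤ f s)
    (hright : ∀ᶠ s in 𝓝 t, f s + ⟪G s, p t - p s⟫_ℝ ≤ f t) :
    HasDerivAt f ⟪G t, q⟫_ℝ t := by
  have hlower : Tendsto (fun s => ⟪G t, slope p t s⟫_ℝ) (𝓝[≠] t) (𝓝 ⟪G t, q⟫_ℝ) :=
    tendsto_const_nhds.inner hp.tendsto_slope
  have hupper : Tendsto (fun s => ⟪G s, slope p t s⟫_ℝ) (𝓝[≠] t) (𝓝 ⟪G t, q⟫_ℝ) :=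
    (hG.tendsto.mono_left nhdsWithin_le_nhds).inner hp.tendsto_slope
  have hdiff : Tendsto (fun s => slope f t s - ⟪G t, slope p t s⟫_ℝ) (𝓝[≠] t) (𝓝 0) := by
    have hgap := (hupper.sub hlower).abs
    rw [sub_self, abs_zero] at hgap
    refine squeeze_zero_norm' ?_ hgap
    filter_upwards [nhdsWithin_le_nhds hleft, nhdsWithin_le_nhds hright] with s hs_left hs_right
    rw [← neg_sub (p s) (p t), inner_neg_right] at hs_right
    simp only [slope_def_module, real_inner_smul_right, smul_eq_mul, Real.norm_eq_abs, ← mul_sub,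
      abs_mul]
    refine mul_le_mul_of_nonneg_left ?_ (abs_nonneg _)
    rw [abs_of_nonneg (by linarith), abs_of_nonneg (by linarith)]
    linarith
  rw [hasDerivAt_iff_tendsto_slope]
  simpa only [sub_add_cancel, zero_add] using hdiff.add hlower

theorem inner_sub_norm_mul_norm_le_of_mul_sq_le_inner {D u : H} {l : ℝ} (hl : 0 ≤ l)
    (h : l * ‖D‖ ^ 2 ≤ ⟪D, u⟫_ℝ) (v : H) :
    ⟪u, v⟫_ℝ - ‖u‖ * ‖v‖ ≤ 2 * l * ⟪D, v⟫_ℝ := by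
  -- The hypothesis says that `(2 * l) • D` lies in the ball of centre `u` through the origin.
  have hball : ‖u - (2 * l) • D‖ ≤ ‖u‖ := by
    refine le_of_sq_le_sq ?_ (norm_nonneg _)
    rw [norm_sub_sq_real, norm_smul, real_inner_smul_right, real_inner_comm, mul_pow,
      Real.norm_eq_abs, sq_abs]
    nlinarith
  have hcauchy : ⟪u - (2 * l) • D, v⟫_ℝ ≤ ‖u‖ * ‖v‖ :=
    (real_inner_le_norm _ _).trans (mul_le_mul_of_nonneg_right hball (norm_nonneg v))
  rw [inner_sub_left, real_inner_smul_left] at hcauchy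
  linarith

theorem neg_norm_mul_norm_le_inner_of_inner_sub_nonneg {D v G : H} {l m : ℝ} (hl : 0 < l)
    (hm : 0 ≤ m) (h : 0 ≤ ⟪D, v - m • G - l • D⟫_ℝ) :
    -(m / l * (‖G‖ * ‖v‖)) ≤ ⟪D, v⟫_ℝ := by
  have hcocoercive : l * ‖D‖ ^ 2 ≤ ⟪D, v - m • G⟫_ℝ := by
    rw [inner_sub_right, real_inner_smul_right, real_inner_self_eq_norm_sq] at h
    linarith
  have hbound := inner_sub_norm_mul_norm_le_of_mul_sq_le_inner hl.le hcocoercive v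
  have hnorm : ‖v - m • G‖ * ‖v‖ ≤ (‖v‖ + m * ‖G‖) * ‖v‖ := by
    gcongr
    simpa only [norm_smul, Real.norm_of_nonneg hm] using norm_sub_le v (m • G)
  have hinner : m * ⟪G, v⟫_ℝ ≤ m * (‖G‖ * ‖v‖) := by gcongr; exact real_inner_le_norm G v
  rw [inner_sub_left, real_inner_smul_left, real_inner_self_eq_norm_sq] at hbound
  rw [div_mul_eq_mul_div, ← neg_div, div_le_iff₀ hl]
  linarith

end SubgradientCurve

section Asymptotics

variable {f g : ℝ → ℝ} {T : ℝ}

theorem exists_tendsto_atTop_of_antitoneOn_Ici (hf : AntitoneOn f (Ici T))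
    (hbdd : BddBelow (f '' Ici T)) : ∃ L, Tendsto f atTop (𝓝 L) := by
  have hanti : Antitone fun t => f (max T t) := fun s t hst =>
    hf (le_max_left T s) (le_max_left T t) (max_le_max_left T hst)
  have hrange : BddBelow (range fun t => f (max T t)) :=
    hbdd.mono (range_subset_iff.2 fun t => mem_image_of_mem f (le_max_left T t))
  refine ⟨_, (tendsto_atTop_ciInf hanti hrange).congr' ?_⟩
  filter_upwards [eventually_ge_atTop T] with t ht
  rw [max_eq_right ht]

theorem antitoneOn_Ici_of_deriv_nonpos (hf : ∀ t ≥ T, DifferentiableAt ℝ f t)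
    (hderiv : ∀ t ≥ T, deriv f t ≤ 0) : AntitoneOn f (Ici T) := by
  refine antitoneOn_of_deriv_nonpos (convex_Ici T)
    (fun t ht => (hf t ht).continuousAt.continuousWithinAt) ?_ ?_
  all_goals rw [interior_Ici]
  · exact fun t ht => (hf t (mem_Ioi.1 ht).le).differentiableWithinAt
  · exact fun t ht => hderiv t (mem_Ioi.1 ht).le

theorem integrableOn_Ioi_of_le_neg_deriv (hf : ∀ t ≥ T, DifferentiableAt ℝ f t)
    (hf_nonneg : ∀ t ≥ T, 0 ≤ f t) (hg : ContinuousOn g (Ici T)) (hg_nonneg : ∀ t ≥ T, 0 ≤ g t)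
    (hderiv : ∀ t ≥ T, deriv f t ≤ -g t) : IntegrableOn g (Ioi T) := by
  have hderiv_nonpos : ∀ t ≥ T, deriv f t ≤ 0 := fun t ht =>
    (hderiv t ht).trans (neg_nonpos.2 (hg_nonneg t ht))
  obtain ⟨L, hL⟩ := exists_tendsto_atTop_of_antitoneOn_Ici
    (antitoneOn_Ici_of_deriv_nonpos hf hderiv_nonpos) ⟨0, forall_mem_image.2 hf_nonneg⟩
  have hderiv_int : IntegrableOn (deriv f) (Ioi T) := integrableOn_Ioi_deriv_of_nonpos'
    (fun t ht => (hf t ht).hasDerivAt) (fun t ht => hderiv_nonpos t (mem_Ioi.1 ht).le) hL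
  refine Integrable.mono' hderiv_int.neg
    ((hg.mono Ioi_subset_Ici_self).aestronglyMeasurable measurableSet_Ioi) ?_
  filter_upwards [ae_restrict_mem measurableSet_Ioi] with t ht
  rw [Real.norm_of_nonneg (hg_nonneg t (mem_Ioi.1 ht).le)]
  exact le_neg_of_le_neg (hderiv t (mem_Ioi.1 ht).le)

theorem eq_zero_of_tendsto_of_integrableOn_div_id {L : ℝ} (hf : Tendsto f atTop (𝓝 L))
    (hint : IntegrableOn (fun t => f t / t) (Ioi T)) : L = 0 := by
  by_contra hL
  have hbigO : (fun t : ℝ => t⁻¹) =O[atTop] fun t => f t / t := by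
    have hone : (fun _ : ℝ => (1 : ℝ)) =O[atTop] f :=
      (Asymptotics.isBigO_const_left_iff_pos_le_norm one_ne_zero).2
        ⟨‖L‖ / 2, by positivity, hf.norm.eventually_const_le (half_lt_self (norm_pos_iff.2 hL))⟩
    simpa only [div_eq_mul_inv, one_mul] using hone.mul (Asymptotics.isBigO_refl (·⁻¹) atTop)
  have hinv : IntegrableAtFilter (fun t : ℝ => t⁻¹) atTop :=
    hbigO.integrableAtFilter measurable_inv.aestronglyMeasurable.stronglyMeasurableAtFilter
      ⟨Ioi T, Ioi_mem_atTop T, hint⟩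
  obtain ⟨a, ha⟩ := integrableAtFilter_atTop_iff.1 hinv
  exact not_integrableOn_Ioi_inv (ha.mono_set Ioi_subset_Ici_self)

theorem exists_tendsto_atTop_of_deriv_le_integrable (hf : ∀ t ≥ T, DifferentiableAt ℝ f t)
    (hf_nonneg : ∀ t ≥ T, 0 ≤ f t) (hg : IntegrableOn g (Ioi T))
    (hderiv : ∀ t ≥ T, deriv f t ≤ g t) : ∃ L, Tendsto f atTop (𝓝 L) := by
  have hg_interval : ∀ {r s}, T ≤ r → r ≤ s → IntervalIntegrable g volume r s := fun hr hrs =>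
    (intervalIntegrable_iff_integrableOn_Ioc_of_le hrs).2
      (hg.mono_set fun _ hu => hr.trans_lt hu.1)
  have hanti : AntitoneOn (fun t => f t - ∫ s in T..t, g s) (Ici T) := by
    intro r hr s _ hrs
    have hincrement : f s - f r ≤ ∫ u in r..s, g u :=
      intervalIntegral.sub_le_integral_of_hasDeriv_right_of_le hrs
        (fun u hu => (hf u (hr.out.trans hu.1)).continuousAt.continuousWithinAt)
        (fun u hu => (hf u (hr.out.trans hu.1.le)).hasDerivAt.hasDerivWithinAt)
        ((intervalIntegrable_iff_integrableOn_Icc_of_le hrs).1 (hg_interval hr hrs))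
        (fun u hu => hderiv u (hr.out.trans hu.1.le))
    have hsplit := intervalIntegral.integral_add_adjacent_intervals
      (hg_interval le_rfl hr) (hg_interval hr hrs)
    dsimp only
    linarith
  have hbdd : BddBelow ((fun t => f t - ∫ s in T..t, g s) '' Ici T) := by
    refine ⟨-∫ s in Ioi T, ‖g s‖, forall_mem_image.2 fun t ht => ?_⟩
    have hint_le : ∫ s in T..t, g s ≤ ∫ s in Ioi T, ‖g s‖ := by
      rw [intervalIntegral.integral_of_le ht]
      exact (le_norm_self _).trans ((norm_integral_le_integral_norm g).trans
        (setIntegral_mono_set hg.norm (Eventually.of_forall fun s => norm_nonneg _)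
          (Eventually.of_forall fun s hs => hs.1)))
    linarith [hf_nonneg t ht]
  obtain ⟨L, hL⟩ := exists_tendsto_atTop_of_antitoneOn_Ici hanti hbdd
  have hlim := hL.add (intervalIntegral_tendsto_integral_Ioi T hg tendsto_id)
  exact ⟨_, by simpa only [id, sub_add_cancel] using hlim⟩

theorem tendsto_zero_of_deriv_le_integrable (hf : ∀ t ≥ T, DifferentiableAt ℝ f t)
    (hf_nonneg : ∀ t ≥ T, 0 ≤ f t) (hg : IntegrableOn g (Ioi T))
    (hderiv : ∀ t ≥ T, deriv f t ≤ g t) (hint : IntegrableOn (fun t => f t / t) (Ioi T)) :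
    Tendsto f atTop (𝓝 0) := by
  obtain ⟨L, hL⟩ := exists_tendsto_atTop_of_deriv_le_integrable hf hf_nonneg hg hderiv
  rwa [eq_zero_of_tendsto_of_integrableOn_div_id hL hint] at hL

end Asymptotics

/-- A solution on `[t₀, ∞)` of `ẍ + (α / t) ẋ + β (d/dt)[∇Φ_λ(x)] + b ∇Φ_λ(x) = 0`, where `Φ` is
proper and convex with minimizer `z`. The proximal point is recorded as a curve `p`, so that
`∇Φ_λ(x) = (x - p) / λ`; primed fields, `v`, `acc` and `gradDeriv` are the derivatives of the
corresponding curves, and `weight'` is that of `w = b - β' - β / t`. -/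
structure InertialMoreauFlow {H : Type*} [NormedAddCommGroup H] [InnerProductSpace ℝ H]
    (Φ : H → EReal) where
  (t₀ α : ℝ)
  (β b lam β' b' lam' weight' : ℝ → ℝ)
  (x v acc p gradDeriv : ℝ → H)
  z : H
  ne_bot : ∀ y, Φ y ≠ ⊥
  exists_ne_top : ∃ y, Φ y ≠ ⊤
  convex : EConvexOn Φ
  le_of_minimizer : ∀ y, Φ z ≤ Φ y
  t₀_pos : 0 < t₀
  β_nonneg : ∀ t ≥ t₀, 0 ≤ β t
  b_pos : ∀ t ≥ t₀, 0 < b t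
  lam_pos : ∀ t ≥ t₀, 0 < lam t
  lam_mono : MonotoneOn lam (Ici t₀)
  hasDerivAt_β : ∀ t ≥ t₀, HasDerivAt β (β' t) t
  hasDerivAt_b : ∀ t ≥ t₀, HasDerivAt b (b' t) t
  hasDerivAt_lam : ∀ t ≥ t₀, HasDerivAt lam (lam' t) t
  hasDerivAt_b_sub : ∀ t ≥ t₀, HasDerivAt (fun s => b s - β' s - β s / s) (weight' t) t
  hasDerivAt_x : ∀ t ≥ t₀, HasDerivAt x (v t) t
  hasDerivAt_v : ∀ t ≥ t₀, HasDerivAt v (acc t) t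
  isProxPt : ∀ t ≥ t₀, IsProxPt Φ (lam t) (x t) (p t)
  hasDerivAt_smul_sub : ∀ t ≥ t₀, HasDerivAt (fun s => (lam s)⁻¹ • (x s - p s)) (gradDeriv t) t
  ode : ∀ t ≥ t₀, acc t + (α / t) • v t + β t • gradDeriv t
    + b t • ((lam t)⁻¹ • (x t - p t)) = 0

namespace InertialMoreauFlow

variable {H : Type*} [NormedAddCommGroup H] [InnerProductSpace ℝ H] {Φ : H → EReal}
  (S : InertialMoreauFlow Φ) {t T ε : ℝ}

/-- The gradient `∇Φ_λ(x)` of the Moreau envelope along the trajectory. -/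
def grad (t : ℝ) : H := (S.lam t)⁻¹ • (S.x t - S.p t)

/-- The value of `Φ` at the proximal point; `p_ne_top` and `ne_bot` make `toReal` faithful. -/
def proxValue (t : ℝ) : ℝ := (Φ (S.p t)).toReal

/-- The optimality gap `Φ_λ(x) - min Φ` of the Moreau envelope along the trajectory. -/
def gap (t : ℝ) : ℝ := moreau Φ (S.lam t) (S.x t) - (Φ S.z).toReal

/-- The coefficient `w = b - β' - β / t`, by which `∇Φ_λ(x)` acts in the derivative of `anchor`. -/
def weight (t : ℝ) : ℝ := S.b t - S.β' t - S.β t / t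

theorem pos_of_ge (ht : S.t₀ ≤ t) : 0 < t := S.t₀_pos.trans_le ht

theorem hasDerivAt_grad (ht : S.t₀ ≤ t) : HasDerivAt S.grad (S.gradDeriv t) t :=
  S.hasDerivAt_smul_sub t ht

theorem hasDerivAt_weight (ht : S.t₀ ≤ t) : HasDerivAt S.weight (S.weight' t) t :=
  S.hasDerivAt_b_sub t ht

theorem acc_eq (ht : S.t₀ ≤ t) :
    S.acc t = -((S.α / t) • S.v t + S.β t • S.gradDeriv t + S.b t • S.grad t) := by
  rw [← sub_eq_zero, ← S.ode t ht, grad]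
  module

theorem lam'_nonneg (ht : S.t₀ ≤ t) : 0 ≤ S.lam' t := by
  rw [← (S.hasDerivAt_lam t ht).hasDerivWithinAt.derivWithin (uniqueDiffOn_Ici S.t₀ t ht)]
  exact S.lam_mono.derivWithin_nonneg

theorem x_sub_p (ht : S.t₀ ≤ t) : S.x t - S.p t = S.lam t • S.grad t := by
  rw [grad, smul_inv_smul₀ (S.lam_pos t ht).ne']

theorem minimizer_ne_top : Φ S.z ≠ ⊤ :=
  let ⟨y, hy⟩ := S.exists_ne_top
  ne_top_of_le_ne_top hy (S.le_of_minimizer y)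

theorem p_ne_top (ht : S.t₀ ≤ t) : Φ (S.p t) ≠ ⊤ :=
  (S.isProxPt t ht).ne_top S.minimizer_ne_top

theorem minimum_le_proxValue (ht : S.t₀ ≤ t) : (Φ S.z).toReal ≤ S.proxValue t :=
  EReal.toReal_le_toReal (S.le_of_minimizer _) (S.ne_bot _) (S.p_ne_top ht)

theorem proxValue_add_inner_le (ht : S.t₀ ≤ t) {y : H} (hy : Φ y ≠ ⊤) :
    S.proxValue t + ⟪S.grad t, y - S.p t⟫_ℝ ≤ (Φ y).toReal :=
  (S.isProxPt t ht).add_inner_le S.convex S.ne_bot hy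

theorem gap_eq (ht : S.t₀ ≤ t) :
    S.gap t = S.proxValue t + S.lam t / 2 * ‖S.grad t‖ ^ 2 - (Φ S.z).toReal := by
  have hlam := S.lam_pos t ht
  rw [gap, (S.isProxPt t ht).moreau_eq (S.ne_bot _) (S.p_ne_top ht), S.x_sub_p ht, norm_smul,
    Real.norm_of_nonneg hlam.le, proxValue]
  field_simp

theorem gap_nonneg (ht : S.t₀ ≤ t) : 0 ≤ S.gap t := by
  have hquad : 0 ≤ S.lam t / 2 * ‖S.grad t‖ ^ 2 :=
    mul_nonneg (half_pos (S.lam_pos t ht)).le (sq_nonneg _)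
  rw [S.gap_eq ht]
  linarith [S.minimum_le_proxValue ht]

theorem gap_add_le_inner (ht : S.t₀ ≤ t) :
    S.gap t + S.lam t / 2 * ‖S.grad t‖ ^ 2 ≤ ⟪S.grad t, S.x t - S.z⟫_ℝ := by
  have hsub := S.proxValue_add_inner_le ht S.minimizer_ne_top
  have hz : S.z - S.p t = S.lam t • S.grad t - (S.x t - S.z) := by rw [← S.x_sub_p ht]; abel
  rw [hz, inner_sub_right, real_inner_smul_right, real_inner_self_eq_norm_sq] at hsub
  rw [S.gap_eq ht]
  linarith

theorem lam_mul_norm_grad_le (ht : S.t₀ ≤ t) : S.lam t * ‖S.grad t‖ ≤ ‖S.x t - S.z‖ := by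
  have hcauchy : S.lam t * ‖S.grad t‖ ^ 2 ≤ ‖S.grad t‖ * ‖S.x t - S.z‖ := by
    have hgap := S.gap_add_le_inner ht
    rw [S.gap_eq ht] at hgap
    linarith [S.minimum_le_proxValue ht, real_inner_le_norm (S.grad t) (S.x t - S.z)]
  rcases (norm_nonneg (S.grad t)).eq_or_lt with hzero | hpos
  · rw [← hzero, mul_zero]
    exact norm_nonneg _
  · exact le_of_mul_le_mul_left (by linarith) hpos

theorem hasDerivAt_p (ht : S.t₀ < t) :
    HasDerivAt S.p (S.v t - S.lam' t • S.grad t - S.lam t • S.gradDeriv t) t := by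
  have hderiv := (S.hasDerivAt_x t ht.le).sub
    ((S.hasDerivAt_lam t ht.le).smul (S.hasDerivAt_grad ht.le))
  refine (hderiv.congr_deriv ?_).congr_of_eventuallyEq ?_
  · abel
  · filter_upwards [Ioi_mem_nhds ht] with s hs
    exact eq_sub_of_add_eq' (sub_eq_iff_eq_add.1 (S.x_sub_p (mem_Ioi.1 hs).le)).symm

theorem hasDerivAt_proxValue (ht : S.t₀ < t) :
    HasDerivAt S.proxValue
      ⟪S.grad t, S.v t - S.lam' t • S.grad t - S.lam t • S.gradDeriv t⟫_ℝ t := by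
  refine hasDerivAt_of_eventually_subgradient (S.hasDerivAt_grad ht.le).continuousAt
    (S.hasDerivAt_p ht) ?_ ?_
  all_goals filter_upwards [Ioi_mem_nhds ht] with s hs
  · exact S.proxValue_add_inner_le ht.le (S.p_ne_top (mem_Ioi.1 hs).le)
  · exact S.proxValue_add_inner_le (mem_Ioi.1 hs).le (S.p_ne_top ht.le)

theorem hasDerivAt_gap (ht : S.t₀ < t) :
    HasDerivAt S.gap (⟪S.grad t, S.v t⟫_ℝ - S.lam' t / 2 * ‖S.grad t‖ ^ 2) t := by
  have hderiv := ((S.hasDerivAt_proxValue ht).add (((S.hasDerivAt_lam t ht.le).div_const 2).mul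
    (S.hasDerivAt_grad ht.le).norm_sq)).sub_const (Φ S.z).toReal
  refine (hderiv.congr_deriv ?_).congr_of_eventuallyEq ?_
  · simp only [inner_sub_right, real_inner_smul_right, real_inner_self_eq_norm_sq]
    ring
  · filter_upwards [Ioi_mem_nhds ht] with s hs using S.gap_eq (mem_Ioi.1 hs).le

theorem inner_gradDeriv_deriv_p_nonneg (ht : S.t₀ < t) :
    0 ≤ ⟪S.gradDeriv t, S.v t - S.lam' t • S.grad t - S.lam t • S.gradDeriv t⟫_ℝ := by
  refine inner_deriv_nonneg_of_eventually_inner_sub_nonneg (S.hasDerivAt_grad ht.le)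
    (S.hasDerivAt_p ht) ?_
  filter_upwards [Ioi_mem_nhds ht] with s hs
  have hst : S.proxValue t + ⟪S.grad t, S.p s - S.p t⟫_ℝ ≤ S.proxValue s :=
    S.proxValue_add_inner_le ht.le (S.p_ne_top (mem_Ioi.1 hs).le)
  have hts : S.proxValue s + ⟪S.grad s, S.p t - S.p s⟫_ℝ ≤ S.proxValue t :=
    S.proxValue_add_inner_le (mem_Ioi.1 hs).le (S.p_ne_top ht.le)
  rw [← neg_sub (S.p s) (S.p t), inner_neg_right] at hts
  rw [inner_sub_left]
  linarith

theorem neg_norm_mul_norm_le_inner_gradDeriv_v (ht : S.t₀ < t) :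
    -(S.lam' t / S.lam t * (‖S.grad t‖ * ‖S.v t‖)) ≤ ⟪S.gradDeriv t, S.v t⟫_ℝ :=
  neg_norm_mul_norm_le_inner_of_inner_sub_nonneg (S.lam_pos t ht.le) (S.lam'_nonneg ht.le)
    (S.inner_gradDeriv_deriv_p_nonneg ht)

/-- The sign and growth conditions on `w` under which `lyapunov ε` decreases. -/
structure WeightGrowth (ε : ℝ) : Prop where
  pos : 0 < ε
  lt : ε < S.α - 1
  weight_nonneg : ∀ t ≥ S.t₀, 0 ≤ S.weight t
  mul_b_le : ∀ t ≥ S.t₀, ε * S.b t ≤ (S.α - 3) * S.weight t - t * S.weight' t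

/-- The vector `c (x - z) + t (ẋ + β ∇Φ_λ(x))` with `c = α - 1 - ε / 2`, whose derivative contains
neither `ẍ` nor the derivative of `∇Φ_λ(x)`. -/
def anchor (ε t : ℝ) : H :=
  (S.α - 1 - ε / 2) • (S.x t - S.z) + t • (S.v t + S.β t • S.grad t)

/-- The Lyapunov function. Its last term, available because `c = α - 1 - ε / 2` is smaller than
`α - 1`, controls the distance of the trajectory to the minimizer `z`. -/
def lyapunov (ε t : ℝ) : ℝ :=
  (t ^ 2 * S.weight t + ε / 2 * (t * S.β t)) * S.gap t + 1 / 2 * ‖S.anchor ε t‖ ^ 2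
    + (S.α - 1 - ε / 2) * (ε / 2) / 2 * ‖S.x t - S.z‖ ^ 2

/-- The quantity `t b (Φ_λ(x) - min Φ) + t ‖ẋ‖²`, by whose multiple the Lyapunov function
dissipates. -/
def dissipation (t : ℝ) : ℝ := t * S.b t * S.gap t + t * ‖S.v t‖ ^ 2

/-- The energy `Φ_λ(x) - min Φ + ‖ẋ‖² / (2 b)`, rescaled by `t² b`. -/
def energy (t : ℝ) : ℝ := t ^ 2 * S.b t * S.gap t + t ^ 2 * ‖S.v t‖ ^ 2 / 2

/-- The error caused by the variation of `λ`, per unit of `‖λ ∇Φ_λ(x)‖²`. -/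
def lamError (t : ℝ) : ℝ :=
  S.lam' t ^ 2 * t ^ 3 * S.β t ^ 2 / S.lam t ^ 4 - S.lam' t * t ^ 2 * S.b t / (2 * S.lam t ^ 2)

theorem dissipation_nonneg (ht : S.t₀ ≤ t) : 0 ≤ S.dissipation t := by
  have := S.pos_of_ge ht
  have := S.b_pos t ht
  have := S.gap_nonneg ht
  unfold dissipation
  positivity

theorem energy_nonneg (ht : S.t₀ ≤ t) : 0 ≤ S.energy t := by
  have := S.b_pos t ht
  have := S.gap_nonneg ht
  unfold energy
  positivity

theorem hasDerivAt_anchor (ht : S.t₀ ≤ t) :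
    HasDerivAt (S.anchor ε) (-(ε / 2) • S.v t - (t * S.weight t) • S.grad t) t := by
  have hderiv := (((S.hasDerivAt_x t ht).sub_const S.z).const_smul (S.α - 1 - ε / 2)).add
    ((hasDerivAt_id t).smul ((S.hasDerivAt_v t ht).add
      ((S.hasDerivAt_β t ht).smul (S.hasDerivAt_grad ht))))
  refine hderiv.congr_deriv ?_
  have ht0 := (S.pos_of_ge ht).ne'
  simp only [Pi.add_apply, Pi.smul_apply', id, S.acc_eq ht, weight]
  match_scalars <;> field_simp <;> ring

theorem hasDerivAt_lyapunov (ht : S.t₀ < t) :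
    HasDerivAt (S.lyapunov ε)
      ((2 * t * S.weight t + t ^ 2 * S.weight' t + ε / 2 * (t * (S.b t - S.weight t))) * S.gap t
        - (t ^ 2 * S.weight t + ε / 2 * (t * S.β t)) * (S.lam' t / 2 * ‖S.grad t‖ ^ 2)
        - (S.α - 1 - ε / 2) * (t * S.weight t) * ⟪S.grad t, S.x t - S.z⟫_ℝ
        - t ^ 2 * S.weight t * S.β t * ‖S.grad t‖ ^ 2 - ε / 2 * (t * ‖S.v t‖ ^ 2)) t := by
  have hcoef := ((hasDerivAt_pow 2 t).mul (S.hasDerivAt_weight ht.le)).add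
    (((hasDerivAt_id t).mul (S.hasDerivAt_β t ht.le)).const_mul (ε / 2))
  have hderiv := ((hcoef.mul (S.hasDerivAt_gap ht)).add
    ((S.hasDerivAt_anchor (ε := ε) ht.le).norm_sq.const_mul (1 / 2 : ℝ))).add
    (((S.hasDerivAt_x t ht.le).sub_const S.z).norm_sq.const_mul
      ((S.α - 1 - ε / 2) * (ε / 2) / 2))
  refine hderiv.congr_deriv ?_
  have hβ' : S.β t + t * S.β' t = t * (S.b t - S.weight t) := by
    have ht0 := (S.pos_of_ge ht.le).ne'
    unfold weight
    field_simp
    ring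
  simp only [anchor, ← hβ', inner_sub_right, inner_add_left, real_inner_smul_left,
    real_inner_smul_right, real_inner_self_eq_norm_sq, Pi.add_apply, Pi.mul_apply, id,
    real_inner_comm (S.grad t) (S.v t), real_inner_comm (S.grad t) (S.x t - S.z),
    Nat.cast_ofNat, Nat.add_one_sub_one, pow_one]
  ring

theorem deriv_lyapunov_le (hε : S.WeightGrowth ε) (ht : S.t₀ < t) :
    deriv (S.lyapunov ε) t ≤ -(ε / 2 * S.dissipation t) := by
  rw [(S.hasDerivAt_lyapunov ht).deriv, dissipation]
  have := hε.pos
  have := S.pos_of_ge ht.le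
  have := S.β_nonneg t ht.le
  have hweight := hε.weight_nonneg t ht.le
  have := S.lam'_nonneg ht.le
  have hgap := S.gap_nonneg ht.le
  have hlam_term : 0 ≤ (t ^ 2 * S.weight t + ε / 2 * (t * S.β t))
      * (S.lam' t / 2 * ‖S.grad t‖ ^ 2) := by positivity
  have hgrad_term : 0 ≤ t ^ 2 * S.weight t * S.β t * ‖S.grad t‖ ^ 2 := by positivity
  have hconvex : (S.α - 1 - ε / 2) * (t * S.weight t) * S.gap t
      ≤ (S.α - 1 - ε / 2) * (t * S.weight t) * ⟪S.grad t, S.x t - S.z⟫_ℝ := by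
    have hquad : 0 ≤ S.lam t / 2 * ‖S.grad t‖ ^ 2 :=
      mul_nonneg (half_pos (S.lam_pos t ht.le)).le (sq_nonneg _)
    refine mul_le_mul_of_nonneg_left (by linarith [S.gap_add_le_inner ht.le])
      (mul_nonneg (by linarith [hε.lt]) (by positivity))
  have hgrowth : t * S.gap t * (ε * S.b t)
      ≤ t * S.gap t * ((S.α - 3) * S.weight t - t * S.weight' t) :=
    mul_le_mul_of_nonneg_left (hε.mul_b_le t ht.le) (by positivity)
  linarith

theorem mul_norm_sq_le_lyapunov (hε : S.WeightGrowth ε) (ht : S.t₀ ≤ t) :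
    (S.α - 1 - ε / 2) * (ε / 2) / 2 * ‖S.x t - S.z‖ ^ 2 ≤ S.lyapunov ε t := by
  have := hε.pos
  have := S.pos_of_ge ht
  have := S.β_nonneg t ht
  have := hε.weight_nonneg t ht
  have := S.gap_nonneg ht
  refine le_add_of_nonneg_left ?_
  positivity

theorem dist_coeff_pos (hε : S.WeightGrowth ε) : 0 < (S.α - 1 - ε / 2) * (ε / 2) / 2 :=
  half_pos (mul_pos (by linarith [hε.pos, hε.lt]) (half_pos hε.pos))

theorem antitoneOn_lyapunov (hε : S.WeightGrowth ε) (hT : S.t₀ < T) :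
    AntitoneOn (S.lyapunov ε) (Ici T) :=
  antitoneOn_Ici_of_deriv_nonpos
    (fun _ ht => (S.hasDerivAt_lyapunov (hT.trans_le ht)).differentiableAt)
    fun _ ht => (S.deriv_lyapunov_le hε (hT.trans_le ht)).trans
      (neg_nonpos.2 (mul_nonneg (half_pos hε.pos).le (S.dissipation_nonneg (hT.le.trans ht))))

theorem exists_norm_sub_minimizer_le (hε : S.WeightGrowth ε) (hT : S.t₀ < T) :
    ∃ M, ∀ t ≥ T, ‖S.x t - S.z‖ ≤ M := by
  refine ⟨√(S.lyapunov ε T / ((S.α - 1 - ε / 2) * (ε / 2) / 2)), fun t ht => ?_⟩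
  refine Real.le_sqrt_of_sq_le ((le_div_iff₀' (S.dist_coeff_pos hε)).2 ?_)
  exact (S.mul_norm_sq_le_lyapunov hε (hT.le.trans ht)).trans
    (S.antitoneOn_lyapunov hε hT self_mem_Ici ht ht)

theorem continuousOn_mul_gap (hT : S.t₀ < T) :
    ContinuousOn (fun t => t * S.b t * S.gap t) (Ici T) := fun t ht =>
  ((continuousAt_id.mul (S.hasDerivAt_b t (hT.le.trans ht)).continuousAt).mul
    (S.hasDerivAt_gap (hT.trans_le ht)).continuousAt).continuousWithinAt

theorem continuousOn_dissipation (hT : S.t₀ < T) : ContinuousOn S.dissipation (Ici T) :=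
  (S.continuousOn_mul_gap hT).add fun t ht =>
    (continuousAt_id.mul
      ((S.hasDerivAt_v t (hT.le.trans ht)).continuousAt.norm.pow 2)).continuousWithinAt

theorem integrableOn_dissipation (hε : S.WeightGrowth ε) (hT : S.t₀ < T) :
    IntegrableOn S.dissipation (Ioi T) := by
  have hmul : IntegrableOn (fun t => ε / 2 * S.dissipation t) (Ioi T) :=
    integrableOn_Ioi_of_le_neg_deriv (f := S.lyapunov ε)
      (fun t ht => (S.hasDerivAt_lyapunov (hT.trans_le ht)).differentiableAt)
      (fun t ht => (mul_nonneg (S.dist_coeff_pos hε).le (sq_nonneg _)).trans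
        (S.mul_norm_sq_le_lyapunov hε (hT.le.trans ht)))
      (continuousOn_const.mul (S.continuousOn_dissipation hT))
      (fun t ht => mul_nonneg (half_pos hε.pos).le (S.dissipation_nonneg (hT.le.trans ht)))
      (fun t ht => S.deriv_lyapunov_le hε (hT.trans_le ht))
  exact (integrable_const_mul_iff (half_pos hε.pos).ne'.isUnit _).1 hmul

theorem integrableOn_mul_gap (hε : S.WeightGrowth ε) (hT : S.t₀ < T) :
    IntegrableOn (fun t => t * S.b t * S.gap t) (Ioi T) := by
  refine Integrable.mono' (S.integrableOn_dissipation hε hT)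
    (((S.continuousOn_mul_gap hT).mono Ioi_subset_Ici_self).aestronglyMeasurable
      measurableSet_Ioi) ?_
  filter_upwards [ae_restrict_mem measurableSet_Ioi] with t hTt
  have ht : S.t₀ ≤ t := (hT.trans hTt).le
  have := S.pos_of_ge ht
  rw [Real.norm_of_nonneg (mul_nonneg (mul_pos this (S.b_pos t ht)).le (S.gap_nonneg ht))]
  exact le_add_of_nonneg_right (by positivity)

theorem integrableOn_mul_norm_v_sq (hε : S.WeightGrowth ε) (hT : S.t₀ < T) :
    IntegrableOn (fun t => t * ‖S.v t‖ ^ 2) (Ioi T) :=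
  ((S.integrableOn_dissipation hε hT).sub (S.integrableOn_mul_gap hε hT)).congr
    (Eventually.of_forall fun _ => add_sub_cancel_left _ _)

theorem integrableOn_energy_div_id (hε : S.WeightGrowth ε) (hT : S.t₀ < T) :
    IntegrableOn (fun t => S.energy t / t) (Ioi T) := by
  refine ((S.integrableOn_mul_gap hε hT).add
    ((S.integrableOn_mul_norm_v_sq hε hT).const_mul (1 / 2))).congr ?_
  filter_upwards [ae_restrict_mem measurableSet_Ioi] with t hTt
  have := (S.pos_of_ge (hT.trans hTt).le).ne'
  simp only [energy, Pi.add_apply]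
  field_simp

theorem aemeasurable_lamError : AEMeasurable S.lamError (volume.restrict (Ici S.t₀)) := by
  have hlam' : AEMeasurable S.lam' (volume.restrict (Ici S.t₀)) := by
    refine (measurable_deriv S.lam).aemeasurable.congr ?_
    filter_upwards [ae_restrict_mem measurableSet_Ici] with t ht
    exact (S.hasDerivAt_lam t ht).deriv
  have hmeas : ∀ {f f' : ℝ → ℝ}, (∀ t ≥ S.t₀, HasDerivAt f (f' t) t) →
      AEMeasurable f (volume.restrict (Ici S.t₀)) := fun hf =>
    ContinuousOn.aemeasurable (fun t ht => (hf t ht).continuousAt.continuousWithinAt)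
      measurableSet_Ici
  have hlam := hmeas S.hasDerivAt_lam
  have hβ := hmeas S.hasDerivAt_β
  have hb := hmeas S.hasDerivAt_b
  unfold lamError
  fun_prop

theorem integrableOn_max_lamError
    (hlam : ∫⁻ t in Ici S.t₀, ENNReal.ofReal (S.lamError t) < ⊤) :
    IntegrableOn (fun t => max (S.lamError t) 0) (Ici S.t₀) := by
  simpa only [IntegrableOn, ENNReal.toReal_ofReal'] using
    integrable_toReal_of_lintegral_ne_top S.aemeasurable_lamError.ennreal_ofReal hlam.ne

theorem hasDerivAt_energy (ht : S.t₀ < t) :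
    HasDerivAt S.energy
      ((2 * t * S.b t + t ^ 2 * S.b' t) * S.gap t
        - t ^ 2 * S.b t * (S.lam' t / 2 * ‖S.grad t‖ ^ 2)
        - (S.α - 1) * (t * ‖S.v t‖ ^ 2) - t ^ 2 * S.β t * ⟪S.gradDeriv t, S.v t⟫_ℝ) t := by
  have hderiv := (((hasDerivAt_pow 2 t).mul (S.hasDerivAt_b t ht.le)).mul
    (S.hasDerivAt_gap ht)).add
    (((hasDerivAt_pow 2 t).mul (S.hasDerivAt_v t ht.le).norm_sq).div_const 2)
  refine hderiv.congr_deriv ?_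
  have hacc : ⟪S.v t, S.acc t⟫_ℝ = -(S.α / t * ‖S.v t‖ ^ 2
      + S.β t * ⟪S.gradDeriv t, S.v t⟫_ℝ + S.b t * ⟪S.grad t, S.v t⟫_ℝ) := by
    rw [S.acc_eq ht.le]
    simp only [inner_neg_right, inner_add_right, real_inner_smul_right,
      real_inner_self_eq_norm_sq, real_inner_comm (S.gradDeriv t) (S.v t),
      real_inner_comm (S.grad t) (S.v t)]
  have ht0 := (S.pos_of_ge ht.le).ne'
  simp only [Pi.mul_apply, hacc, Nat.cast_ofNat, Nat.add_one_sub_one, pow_one]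
  field_simp
  ring

theorem deriv_energy_le {C M : ℝ} (ht : S.t₀ < t)
    (hC : 2 * t * S.b t + t ^ 2 * S.b' t ≤ C * (t * S.b t)) (hM : ‖S.x t - S.z‖ ≤ M) :
    deriv S.energy t ≤ C * (t * S.b t * S.gap t) + (5 / 4 - S.α) * (t * ‖S.v t‖ ^ 2)
      + M ^ 2 * max (S.lamError t) 0 := by
  rw [(S.hasDerivAt_energy ht).deriv]
  have ht0 := S.pos_of_ge ht.le
  have hβ := S.β_nonneg t ht.le
  have hlam := S.lam_pos t ht.le
  have hgap_term : (2 * t * S.b t + t ^ 2 * S.b' t) * S.gap t ≤ C * (t * S.b t) * S.gap t :=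
    mul_le_mul_of_nonneg_right hC (S.gap_nonneg ht.le)
  have hhessian : t ^ 2 * S.β t * (-(S.lam' t / S.lam t * (‖S.grad t‖ * ‖S.v t‖)))
      ≤ t ^ 2 * S.β t * ⟪S.gradDeriv t, S.v t⟫_ℝ :=
    mul_le_mul_of_nonneg_left (S.neg_norm_mul_norm_le_inner_gradDeriv_v ht) (by positivity)
  have hyoung : t ^ 2 * S.β t * (S.lam' t / S.lam t * (‖S.grad t‖ * ‖S.v t‖))
      ≤ t ^ 3 * S.β t ^ 2 * (S.lam' t / S.lam t) ^ 2 * ‖S.grad t‖ ^ 2 + t * ‖S.v t‖ ^ 2 / 4 := by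
    have hsq : 0 ≤ t * (t * S.β t * (S.lam' t / S.lam t) * ‖S.grad t‖ - ‖S.v t‖ / 2) ^ 2 := by
      positivity
    linarith
  have herror : (S.lam t * ‖S.grad t‖) ^ 2 * S.lamError t
      = t ^ 3 * S.β t ^ 2 * (S.lam' t / S.lam t) ^ 2 * ‖S.grad t‖ ^ 2
        - t ^ 2 * S.b t * (S.lam' t / 2 * ‖S.grad t‖ ^ 2) := by
    unfold lamError
    field_simp
  have herror_le : (S.lam t * ‖S.grad t‖) ^ 2 * S.lamError t ≤ M ^ 2 * max (S.lamError t) 0 :=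
    (mul_le_mul_of_nonneg_left (le_max_left _ _) (sq_nonneg _)).trans
      (mul_le_mul_of_nonneg_right
        (pow_le_pow_left₀ (by positivity) ((S.lam_mul_norm_grad_le ht.le).trans hM) 2)
        (le_max_right _ _))
  linarith

theorem tendsto_energy_zero {C : ℝ} (hε : S.WeightGrowth ε)
    (hlam : ∫⁻ t in Ici S.t₀, ENNReal.ofReal (S.lamError t) < ⊤)
    (hC : ∀ t ≥ S.t₀, 2 * t * S.b t + t ^ 2 * S.b' t ≤ C * (t * S.b t)) :
    Tendsto S.energy atTop (𝓝 0) := by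
  have hT : S.t₀ < S.t₀ + 1 := lt_add_one _
  obtain ⟨M, hM⟩ := S.exists_norm_sub_minimizer_le hε hT
  have herror : IntegrableOn (fun t => max (S.lamError t) 0) (Ioi (S.t₀ + 1)) :=
    (S.integrableOn_max_lamError hlam).mono_set
      (Ioi_subset_Ici_self.trans (Ici_subset_Ici.2 hT.le))
  exact tendsto_zero_of_deriv_le_integrable
    (fun t ht => (S.hasDerivAt_energy (hT.trans_le ht)).differentiableAt)
    (fun t ht => S.energy_nonneg (hT.le.trans ht))
    ((((S.integrableOn_mul_gap hε hT).const_mul C).add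
      ((S.integrableOn_mul_norm_v_sq hε hT).const_mul (5 / 4 - S.α))).add
        (herror.const_mul (M ^ 2)))
    (fun t ht => S.deriv_energy_le (hT.trans_le ht) (hC t (hT.le.trans ht)) (hM t ht))
    (S.integrableOn_energy_div_id hε hT)

theorem tendsto_mul_gap_zero {C : ℝ} (hε : S.WeightGrowth ε)
    (hlam : ∫⁻ t in Ici S.t₀, ENNReal.ofReal (S.lamError t) < ⊤)
    (hC : ∀ t ≥ S.t₀, 2 * t * S.b t + t ^ 2 * S.b' t ≤ C * (t * S.b t)) :
    Tendsto (fun t => t ^ 2 * S.b t * S.gap t) atTop (𝓝 0) := by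
  refine squeeze_zero' ?_ ?_ (S.tendsto_energy_zero hε hlam hC)
  all_goals filter_upwards [eventually_ge_atTop S.t₀] with t ht
  · exact mul_nonneg (mul_nonneg (sq_nonneg t) (S.b_pos t ht).le) (S.gap_nonneg ht)
  · exact le_add_of_nonneg_right (by positivity)

end InertialMoreauFlow

theorem moreau_values_little_o_general
    {H : Type*} [NormedAddCommGroup H] [InnerProductSpace ℝ H]
    (Φ : H → EReal)
    (hΦbot : ∀ y, Φ y ≠ ⊥) (hΦproper : ∃ y, Φ y ≠ ⊤)
    (hΦconv : EConvexOn Φ)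
    (t₀ α : ℝ) (ht₀ : 0 < t₀)
    (β b lam β' b' lam' w' : ℝ → ℝ)
    (hβnonneg : ∀ t ≥ t₀, 0 ≤ β t)
    (hbpos : ∀ t ≥ t₀, 0 < b t)
    (hlampos : ∀ t ≥ t₀, 0 < lam t)
    (hβ' : ∀ t ≥ t₀, HasDerivAt β (β' t) t)
    (hb' : ∀ t ≥ t₀, HasDerivAt b (b' t) t)
    (hlam' : ∀ t ≥ t₀, HasDerivAt lam (lam' t) t)
    (hw' : ∀ t ≥ t₀, HasDerivAt (fun s => b s - β' s - β s / s) (w' t) t)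
    (x v acc p G' : ℝ → H)
    (hx : ∀ t ≥ t₀, HasDerivAt x (v t) t)
    (hv : ∀ t ≥ t₀, HasDerivAt v (acc t) t)
    (hp : ∀ t ≥ t₀, IsProxPt Φ (lam t) (x t) (p t))
    (hG' : ∀ t ≥ t₀, HasDerivAt (fun s => (lam s)⁻¹ • (x s - p s)) (G' t) t)
    (hode : ∀ t ≥ t₀, acc t + (α / t) • v t + β t • G' t
        + b t • ((lam t)⁻¹ • (x t - p t)) = 0)
    (hlammono : MonotoneOn lam (Ici t₀))
    (hw : ∀ t ≥ t₀, β' t + β t / t ≤ b t)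
    (hAs2 : ∃ ε, 0 < ε ∧ ε < α - 1 ∧
      ∀ t ≥ t₀, ε * b t ≤ (α - 3) * (b t - β' t - β t / t) - t * w' t)
    (hAs4 : ∫⁻ t in Ici t₀, ENNReal.ofReal ((lam' t) ^ 2 * t ^ 3 * (β t) ^ 2 / (lam t) ^ 4
      - lam' t * t ^ 2 * b t / (2 * (lam t) ^ 2)) < ⊤)
    (hAs : ∃ C : ℝ, ∀ t ≥ t₀, 2 * t * b t + t ^ 2 * b' t ≤ C * (t * b t))
    (z : H) (hz : ∀ y, Φ z ≤ Φ y) :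
    Tendsto (fun t => t ^ 2 * b t * (moreau Φ (lam t) (x t) - (Φ z).toReal))
      atTop (𝓝 0) := by
  obtain ⟨ε, hε, hεα, hgrowth⟩ := hAs2
  obtain ⟨C, hC⟩ := hAs
  let S : InertialMoreauFlow Φ :=
    { t₀, α, β, b, lam, β', b', lam', x, v, acc, p, z, weight' := w', gradDeriv := G',
      ne_bot := hΦbot, exists_ne_top := hΦproper, convex := hΦconv, le_of_minimizer := hz,
      t₀_pos := ht₀, β_nonneg := hβnonneg, b_pos := hbpos, lam_pos := hlampos,
      lam_mono := hlammono, hasDerivAt_β := hβ', hasDerivAt_b := hb', hasDerivAt_lam := hlam',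
      hasDerivAt_b_sub := hw', hasDerivAt_x := hx, hasDerivAt_v := hv, isProxPt := hp,
      hasDerivAt_smul_sub := hG', ode := hode }
  have hweight : S.WeightGrowth ε :=
    { pos := hε, lt := hεα, mul_b_le := hgrowth
      weight_nonneg := fun t ht => by
        rw [InertialMoreauFlow.weight, sub_sub]
        exact sub_nonneg.2 (hw t ht) }
  exact S.tendsto_mul_gap_zero hweight hAs4 hC

theorem moreau_values_little_o
    {H : Type*} [NormedAddCommGroup H] [InnerProductSpace ℝ H] [CompleteSpace H]
    (Φ : H → EReal)
    (hΦbot : ∀ y, Φ y ≠ ⊥) (hΦproper : ∃ y, Φ y ≠ ⊤)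
    (hΦconv : EConvexOn Φ) (hΦlsc : LowerSemicontinuous Φ)
    (t₀ α : ℝ) (ht₀ : 0 < t₀)
    (β b lam β' b' lam' w' : ℝ → ℝ)
    (hβnonneg : ∀ t ≥ t₀, 0 ≤ β t)
    (hbpos : ∀ t ≥ t₀, 0 < b t)
    (hlampos : ∀ t ≥ t₀, 0 < lam t)
    (hβ' : ∀ t ≥ t₀, HasDerivAt β (β' t) t)
    (hb' : ∀ t ≥ t₀, HasDerivAt b (b' t) t)
    (hlam' : ∀ t ≥ t₀, HasDerivAt lam (lam' t) t)
    (hw' : ∀ t ≥ t₀, HasDerivAt (fun s => b s - β' s - β s / s) (w' t) t)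
    (x v acc p G' : ℝ → H)
    (hx : ∀ t ≥ t₀, HasDerivAt x (v t) t)
    (hv : ∀ t ≥ t₀, HasDerivAt v (acc t) t)
    (hp : ∀ t ≥ t₀, IsProxPt Φ (lam t) (x t) (p t))
    (hG' : ∀ t ≥ t₀, HasDerivAt (fun s => (lam s)⁻¹ • (x s - p s)) (G' t) t)
    (hode : ∀ t ≥ t₀, acc t + (α / t) • v t + β t • G' t
        + b t • ((lam t)⁻¹ • (x t - p t)) = 0)
    (hα : 1 < α)
    (hlammono : MonotoneOn lam (Set.Ici t₀))
    (hβmono : MonotoneOn β (Set.Ici t₀))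
    (hw : ∀ t ≥ t₀, β' t + β t / t < b t)
    (hAs2 : ∃ ε, 0 < ε ∧ ε < α - 1 ∧
      ∀ t ≥ t₀, ε * b t ≤ (α - 3) * (b t - β' t - β t / t) - t * w' t)
    (hAs4 : ∫⁻ t in Set.Ici t₀, ENNReal.ofReal ((lam' t) ^ 2 * t ^ 3 * (β t) ^ 2 / (lam t) ^ 4
      - lam' t * t ^ 2 * b t / (2 * (lam t) ^ 2)) < ⊤)
    (hAs : ∃ C > (0 : ℝ), ∀ t ≥ t₀, 2 * t * b t + t ^ 2 * b' t ≤ C * (t * b t))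
    (z : H) (hz : ∀ y, Φ z ≤ Φ y)
    :
    Filter.Tendsto (fun t => t ^ 2 * b t * (moreau Φ (lam t) (x t) - (Φ z).toReal))
      Filter.atTop (nhds 0) := by
  exact moreau_values_little_o_general Φ hΦbot hΦproper hΦconv t₀ α ht₀ β b lam β' b' lam' w'
    hβnonneg hbpos hlampos hβ' hb' hlam' hw' x v acc p G' hx hv hp hG' hode hlammono
    (fun t ht => (hw t ht).le) hAs2 hAs4 (hAs.imp fun _ hC => hC.2) z hz
end
end

section
/- Assume α > 1, both λ and β are nondecreasing on [t₀,∞), b(t) > β'(t) + β(t)/t (equivalently w(t) > 0) for every t ≥ t₀, there exists ε ∈ (0, α−1) with (α−3)·w(t) − t·w'(t) ≥ ε·b(t) for every t ≥ t₀, ∫_{t₀}^{∞} [ λ'(t)²·t³·β(t)²/λ(t)⁴ − λ'(t)·t²·b(t)/(2·λ(t)²) ]_+ dt < +∞ (where [·]_+ denotes the positive part), and there exists C > 0 with (d/dt)(t²·b(t)) ≤ C·t·b(t) for every t ≥ t₀. Then t·‖ẋ(t)‖ → 0 as t → +∞, i.e. ‖ẋ(t)‖ = o(1/t). -/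
open Set MeasureTheory Filter Real

noncomputable section

/-
Convexity makes the Lyapunov function dissipate a multiple of `t (‖v‖² + b φ)`, where `φ ≥ 0` is the
excess of the Moreau envelope over its minimum; being decreasing and nonnegative it also keeps `x`
bounded. Differentiating `W = t² (‖v‖² / 2 + b φ)` leaves the cross term `-t² β ⟪ġ, v⟫`, which
monotonicity of the subdifferential at the moving proximal point controls by `λ' ‖g‖ ‖v‖ / λ`. Since
`λ ‖g‖` is bounded, Young's inequality bounds `W'` by a multiple of the dissipation plus an
integrable function, so `W` converges. As `W ≤ t · t (‖v‖² + b φ)` and `∫ dt / t = ∞`, a positive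
limit of `W` would drive the Lyapunov function to `-∞`.
-/

open scoped RealInnerProductSpace

section Derivatives

theorem hasDerivAt_of_eventually_le_of_eventually_le {f L U : ℝ → ℝ} {d t : ℝ}
    (hL : HasDerivAt L d t) (hU : HasDerivAt U d t) (hLt : L t = f t) (hUt : U t = f t)
    (hLf : ∀ᶠ s in nhds t, L s ≤ f s) (hfU : ∀ᶠ s in nhds t, f s ≤ U s) : HasDerivAt f d t := by
  rw [hasDerivAt_iff_isLittleO, Asymptotics.isLittleO_iff] at *
  intro c hc
  filter_upwards [hL hc, hU hc, hLf, hfU] with s hLs hUs hLfs hfUs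
  rw [Real.norm_eq_abs, abs_le] at *
  rw [hLt] at hLs
  rw [hUt] at hUs
  constructor <;> linarith [hLs.1, hUs.2]

theorem nonneg_of_hasDerivAt_of_monotoneOn_Ici {f : ℝ → ℝ} {f' a t : ℝ}
    (hf : MonotoneOn f (Ici a)) (hf' : HasDerivAt f f' t) (ht : a ≤ t) : 0 ≤ f' := by
  rw [← hf'.hasDerivWithinAt.derivWithin (uniqueDiffOn_Ici a t ht)]
  exact hf.derivWithin_nonneg

variable {H : Type*} [NormedAddCommGroup H] [InnerProductSpace ℝ H]

theorem inner_nonneg_of_hasDerivAt {g p : ℝ → H} {g' p' : H} {t : ℝ}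
    (hg : HasDerivAt g g' t) (hp : HasDerivAt p p' t)
    (hmono : ∀ᶠ s in nhds t, 0 ≤ ⟪g s - g t, p s - p t⟫) : 0 ≤ ⟪g', p'⟫ := by
  refine ge_of_tendsto (hg.tendsto_slope.inner (𝕜 := ℝ) hp.tendsto_slope) ?_
  filter_upwards [hmono.filter_mono nhdsWithin_le_nhds] with s hs
  rw [slope_def_module, slope_def_module, real_inner_smul_left, real_inner_smul_right, ← mul_assoc]
  exact mul_nonneg (mul_self_nonneg _) hs

theorem hasDerivAt_norm_sq_div_two_mul {lam : ℝ → ℝ} {y : ℝ → H} {lam' t : ℝ} {y' : H}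
    (hlam₀ : lam t ≠ 0) (hlam : HasDerivAt lam lam' t) (hy : HasDerivAt y y' t) :
    HasDerivAt (fun s => ‖y s‖ ^ 2 / (2 * lam s))
      (⟪(lam t)⁻¹ • y t, y'⟫ - lam' / 2 * ‖(lam t)⁻¹ • y t‖ ^ 2) t := by
  refine (hy.norm_sq.fun_div (hlam.const_mul 2) (by positivity)).congr_deriv ?_
  rw [real_inner_smul_left, norm_smul, mul_pow ‖(lam t)⁻¹‖, norm_inv, inv_pow, Real.norm_eq_abs,
    sq_abs]
  field_simp

theorem hasDerivAt_of_hasDerivAt_inv_smul_sub {lam : ℝ → ℝ} {x p : ℝ → H} {lam' t : ℝ} {x' g' : H}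
    (hlam₀ : ∀ᶠ s in nhds t, lam s ≠ 0) (hlam : HasDerivAt lam lam' t) (hx : HasDerivAt x x' t)
    (hg : HasDerivAt (fun s => (lam s)⁻¹ • (x s - p s)) g' t) :
    HasDerivAt p (x' - lam' • ((lam t)⁻¹ • (x t - p t)) - lam t • g') t := by
  refine ((hx.sub (hlam.smul hg)).congr_of_eventuallyEq ?_).congr_deriv (by abel)
  filter_upwards [hlam₀] with s hs
  simp only [Pi.sub_apply, Pi.smul_apply', smul_inv_smul₀ hs, sub_sub_cancel]

theorem neg_inner_le_of_inner_sub_nonneg {a v g : H} {l l' : ℝ} (hl : 0 < l) (hl' : 0 ≤ l')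
    (hmono : 0 ≤ ⟪a, v - l' • g - l • a⟫) : -⟪a, v⟫ ≤ l' / l * ‖g‖ * ‖v‖ := by
  rcases le_or_gt 0 ⟪a, v⟫ with hav | hav
  · exact (neg_nonpos.2 hav).trans (by positivity)
  have hexpand : l * ‖a‖ ^ 2 + l' * ⟪a, g⟫ ≤ ⟪a, v⟫ := by
    rw [inner_sub_right, inner_sub_right, real_inner_smul_right, real_inner_smul_right,
      real_inner_self_eq_norm_sq] at hmono
    linarith
  have hcauchy : -(‖a‖ * ‖g‖) ≤ ⟪a, g⟫ := neg_le_of_abs_le (abs_real_inner_le_norm a g)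
  have ha : ‖a‖ * (l * ‖a‖) ≤ ‖a‖ * (l' * ‖g‖) := by
    linarith [mul_le_mul_of_nonneg_left hcauchy hl']
  have ha₀ : 0 < ‖a‖ := norm_pos_iff.2 fun h => by simp [h] at hav
  have hnorm : ‖a‖ ≤ l' / l * ‖g‖ := by
    rw [div_mul_eq_mul_div, le_div_iff₀' hl]
    exact le_of_mul_le_mul_left ha ha₀
  calc -⟪a, v⟫ ≤ ‖a‖ * ‖v‖ := neg_le.1 (neg_le_of_abs_le (abs_real_inner_le_norm a v))
    _ ≤ l' / l * ‖g‖ * ‖v‖ := by gcongr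

end Derivatives

namespace IsProxPt

variable {H : Type*} [NormedAddCommGroup H] [InnerProductSpace ℝ H]
variable {f : H → EReal} {l l₁ l₂ : ℝ} {x x₁ x₂ p p₁ p₂ y z : H}

theorem apply_ne_top (hp : IsProxPt f l x p) (hy : f y ≠ ⊤) : f p ≠ ⊤ := fun htop => by
  have hle := hp y
  rw [htop, EReal.top_add_coe, top_le_iff] at hle
  exact EReal.add_ne_top hy (EReal.coe_ne_top _) hle

theorem toReal_add_le (hp : IsProxPt f l x p) (hbot : ∀ y, f y ≠ ⊥) (hy : f y ≠ ⊤) :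
    (f p).toReal + ‖x - p‖ ^ 2 / (2 * l) ≤ (f y).toReal + ‖x - y‖ ^ 2 / (2 * l) := by
  have hle := hp y
  rw [← EReal.coe_toReal (hp.apply_ne_top hy) (hbot p), ← EReal.coe_toReal hy (hbot y)] at hle
  exact_mod_cast hle

theorem moreau_eq_s10 (hp : IsProxPt f l x p) (hbot : f p ≠ ⊥) (htop : f p ≠ ⊤) :
    moreau f l x = (f p).toReal + ‖x - p‖ ^ 2 / (2 * l) := by
  have hmin : ⨅ y, f y + ((‖x - y‖ ^ 2 / (2 * l) : ℝ) : EReal)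
      = f p + ((‖x - p‖ ^ 2 / (2 * l) : ℝ) : EReal) :=
    le_antisymm (iInf_le _ p) (le_iInf hp)
  rw [moreau, hmin, EReal.toReal_add htop hbot (EReal.coe_ne_top _) (EReal.coe_ne_bot _),
    EReal.toReal_coe]

theorem moreau_le (hp : IsProxPt f l x p) (hbot : ∀ y, f y ≠ ⊥) (hy : f y ≠ ⊤) :
    moreau f l x ≤ (f y).toReal + ‖x - y‖ ^ 2 / (2 * l) := by
  rw [hp.moreau_eq_s10 (hbot p) (hp.apply_ne_top hy)]
  exact hp.toReal_add_le hbot hy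

theorem toReal_le_of_forall_le (hp : IsProxPt f l x p) (hbot : f z ≠ ⊥) (htop : f z ≠ ⊤)
    (hz : ∀ y, f z ≤ f y) : (f z).toReal ≤ (f p).toReal :=
  EReal.toReal_le_toReal (hz p) hbot (hp.apply_ne_top htop)

theorem toReal_le_moreau (hp : IsProxPt f l x p) (hl : 0 ≤ l) (hbot : ∀ y, f y ≠ ⊥)
    (htop : f z ≠ ⊤) (hz : ∀ y, f z ≤ f y) : (f z).toReal ≤ moreau f l x := by
  rw [hp.moreau_eq_s10 (hbot p) (hp.apply_ne_top htop)]
  have := hp.toReal_le_of_forall_le (hbot z) htop hz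
  exact le_add_of_le_of_nonneg this (by positivity)

theorem norm_sub_le (hp : IsProxPt f l x p) (hl : 0 < l) (hbot : ∀ y, f y ≠ ⊥)
    (htop : f z ≠ ⊤) (hz : ∀ y, f z ≤ f y) : ‖x - p‖ ≤ ‖x - z‖ := by
  have hfp := hp.toReal_le_of_forall_le (hbot z) htop hz
  have hdiv : ‖x - p‖ ^ 2 / (2 * l) ≤ ‖x - z‖ ^ 2 / (2 * l) := by
    linarith [hp.toReal_add_le hbot htop]
  exact le_of_sq_le_sq ((div_le_div_iff_of_pos_right (by positivity)).1 hdiv) (norm_nonneg _)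

/-- Minimality of `p` against the point at parameter `a` of the segment from `p` to `y`. -/
theorem toReal_add_inner_le_add_mul (hp : IsProxPt f l x p) (hl : 0 < l) (hbot : ∀ y, f y ≠ ⊥)
    (hconv : EConvexOn f) (hy : f y ≠ ⊤) {a : ℝ} (ha : 0 < a) (ha₁ : a ≤ 1) :
    (f p).toReal + ⟪l⁻¹ • (x - p), y - p⟫ ≤ (f y).toReal + a * (‖y - p‖ ^ 2 / (2 * l)) := by
  have hsegment : (f p).toReal + ‖x - p‖ ^ 2 / (2 * l) ≤ (1 - a) * (f p).toReal
      + a * (f y).toReal + ‖x - ((1 - a) • p + a • y)‖ ^ 2 / (2 * l) := by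
    have hle := (hp ((1 - a) • p + a • y)).trans
      (add_le_add_left (hconv p y (1 - a) a (by linarith) ha.le (by ring)) _)
    rw [← EReal.coe_toReal (hp.apply_ne_top hy) (hbot p), ← EReal.coe_toReal hy (hbot y)] at hle
    exact_mod_cast hle
  have hnorm : ‖x - ((1 - a) • p + a • y)‖ ^ 2
      = ‖x - p‖ ^ 2 - 2 * a * ⟪x - p, y - p⟫ + a ^ 2 * ‖y - p‖ ^ 2 := by
    rw [show x - ((1 - a) • p + a • y) = (x - p) - a • (y - p) by module, norm_sub_sq_real,
      real_inner_smul_right, norm_smul, mul_pow, Real.norm_eq_abs, sq_abs, mul_assoc]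
  have hdiv : ‖x - ((1 - a) • p + a • y)‖ ^ 2 / (2 * l) = ‖x - p‖ ^ 2 / (2 * l)
      - a * (l⁻¹ * ⟪x - p, y - p⟫) + a * (a * (‖y - p‖ ^ 2 / (2 * l))) := by
    rw [hnorm]
    field_simp
  rw [real_inner_smul_left]
  refine le_of_mul_le_mul_left ?_ ha
  linarith

theorem toReal_add_inner_le (hp : IsProxPt f l x p) (hl : 0 < l) (hbot : ∀ y, f y ≠ ⊥)
    (hconv : EConvexOn f) (hy : f y ≠ ⊤) :
    (f p).toReal + ⟪l⁻¹ • (x - p), y - p⟫ ≤ (f y).toReal := by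
  have hlim : Tendsto (fun a : ℝ => (f y).toReal + a * (‖y - p‖ ^ 2 / (2 * l)))
      (nhdsWithin 0 (Ioi 0)) (nhds ((f y).toReal + 0 * (‖y - p‖ ^ 2 / (2 * l)))) :=
    (Continuous.tendsto (by fun_prop) 0).mono_left nhdsWithin_le_nhds
  rw [zero_mul, add_zero] at hlim
  refine ge_of_tendsto hlim ?_
  filter_upwards [Ioc_mem_nhdsGT one_pos] with a ha
  exact hp.toReal_add_inner_le_add_mul hl hbot hconv hy ha.1 ha.2

theorem moreau_sub_toReal_le_inner (hp : IsProxPt f l x p) (hl : 0 < l) (hbot : ∀ y, f y ≠ ⊥)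
    (hconv : EConvexOn f) (hy : f y ≠ ⊤) :
    moreau f l x - (f y).toReal ≤ ⟪l⁻¹ • (x - p), x - y⟫ := by
  have hsplit : ⟪l⁻¹ • (x - p), x - y⟫
      = 2 * (‖x - p‖ ^ 2 / (2 * l)) - ⟪l⁻¹ • (x - p), y - p⟫ := by
    rw [show x - y = (x - p) - (y - p) by abel, inner_sub_right, real_inner_smul_left (x - p),
      real_inner_self_eq_norm_sq]
    field_simp
  have hquad : 0 ≤ ‖x - p‖ ^ 2 / (2 * l) := by positivity
  rw [hp.moreau_eq_s10 (hbot p) (hp.apply_ne_top hy), hsplit]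
  linarith [hp.toReal_add_inner_le hl hbot hconv hy]

theorem inner_sub_nonneg (hp₁ : IsProxPt f l₁ x₁ p₁) (hp₂ : IsProxPt f l₂ x₂ p₂) (hl₁ : 0 < l₁)
    (hl₂ : 0 < l₂) (hbot : ∀ y, f y ≠ ⊥) (hconv : EConvexOn f) (hy : f y ≠ ⊤) :
    0 ≤ ⟪l₁⁻¹ • (x₁ - p₁) - l₂⁻¹ • (x₂ - p₂), p₁ - p₂⟫ := by
  have h₁ := hp₁.toReal_add_inner_le hl₁ hbot hconv (hp₂.apply_ne_top hy)
  have h₂ := hp₂.toReal_add_inner_le hl₂ hbot hconv (hp₁.apply_ne_top hy)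
  rw [← neg_sub p₁ p₂, inner_neg_right] at h₁
  rw [inner_sub_left]
  linarith

end IsProxPt

section MovingEnvelope

variable {H : Type*} [NormedAddCommGroup H] [InnerProductSpace ℝ H] {f : H → EReal}
variable {lam : ℝ → ℝ} {x p : ℝ → H} {lam' t : ℝ} {x' p' g' y : H}

/-- Freezing the minimizer at `p t` bounds the envelope at time `s` from above; using `p s` as a
competitor at time `t` bounds it from below. Both bounds have the same derivative at `t`. -/
theorem hasDerivAt_moreau (hbot : ∀ y, f y ≠ ⊥) (hy : f y ≠ ⊤) (hlam₀ : lam t ≠ 0)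
    (hprox : ∀ᶠ s in nhds t, IsProxPt f (lam s) (x s) (p s)) (hlam : HasDerivAt lam lam' t)
    (hx : HasDerivAt x x' t) (hp : HasDerivAt p p' t) :
    HasDerivAt (fun s => moreau f (lam s) (x s))
      (⟪(lam t)⁻¹ • (x t - p t), x'⟫ - lam' / 2 * ‖(lam t)⁻¹ • (x t - p t)‖ ^ 2) t := by
  have hproxt := hprox.self_of_nhds
  have hmoreaut := hproxt.moreau_eq_s10 (hbot _) (hproxt.apply_ne_top hy)
  have hupper : HasDerivAt (fun s => (f (p t)).toReal + ‖x s - p t‖ ^ 2 / (2 * lam s))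
      (⟪(lam t)⁻¹ • (x t - p t), x'⟫ - lam' / 2 * ‖(lam t)⁻¹ • (x t - p t)‖ ^ 2) t :=
    (hasDerivAt_norm_sq_div_two_mul hlam₀ hlam (hx.sub_const _)).const_add _
  have hlower : HasDerivAt (fun s => moreau f (lam t) (x t) + (‖x s - p s‖ ^ 2 / (2 * lam s)
      - ‖x t - p s‖ ^ 2 / (2 * lam t)))
      (⟪(lam t)⁻¹ • (x t - p t), x'⟫ - lam' / 2 * ‖(lam t)⁻¹ • (x t - p t)‖ ^ 2) t := by
    refine (((hasDerivAt_norm_sq_div_two_mul hlam₀ hlam (hx.fun_sub hp)).fun_sub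
      (hasDerivAt_norm_sq_div_two_mul (lam := fun _ => lam t) hlam₀ (hasDerivAt_const t (lam t))
        (hp.const_sub (x t)))).const_add _).congr_deriv ?_
    rw [inner_sub_right, inner_neg_right]
    ring
  refine hasDerivAt_of_eventually_le_of_eventually_le hlower hupper (by simp) hmoreaut.symm ?_ ?_
  · filter_upwards [hprox] with s hs
    have hps := hs.apply_ne_top hy
    rw [hs.moreau_eq_s10 (hbot _) hps]
    linarith [hproxt.moreau_le hbot hps]
  · filter_upwards [hprox] with s hs
    exact hs.moreau_le hbot (hproxt.apply_ne_top hy)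

theorem inner_hasDerivAt_proxGradient_nonneg (hbot : ∀ y, f y ≠ ⊥) (hconv : EConvexOn f)
    (hy : f y ≠ ⊤) (hlam₀ : ∀ᶠ s in nhds t, 0 < lam s)
    (hprox : ∀ᶠ s in nhds t, IsProxPt f (lam s) (x s) (p s))
    (hg : HasDerivAt (fun s => (lam s)⁻¹ • (x s - p s)) g' t) (hp : HasDerivAt p p' t) :
    0 ≤ ⟪g', p'⟫ := by
  refine inner_nonneg_of_hasDerivAt hg hp ?_
  filter_upwards [hlam₀, hprox] with s hs hproxs
  exact hproxs.inner_sub_nonneg hprox.self_of_nhds hs hlam₀.self_of_nhds hbot hconv hy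

end MovingEnvelope

section Asymptotics

theorem exists_tendsto_atTop_of_antitoneOn_Ici_s10 {F : ℝ → ℝ} {a m : ℝ}
    (hF : AntitoneOn F (Ici a)) (hm : ∀ t ≥ a, m ≤ F t) : ∃ L, Tendsto F atTop (nhds L) := by
  have hanti : Antitone fun t => F (max t a) := fun s t hst =>
    hF (le_max_right s a) (le_max_right t a) (max_le_max_right a hst)
  have hbdd : BddBelow (range fun t => F (max t a)) :=
    ⟨m, forall_mem_range.2 fun t => hm _ (le_max_right t a)⟩
  refine ⟨_, (tendsto_atTop_ciInf hanti hbdd).congr' ?_⟩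
  filter_upwards [eventually_ge_atTop a] with t ht
  rw [max_eq_left ht]

theorem antitoneOn_Ici_add_integral_Ioi_of_deriv_le {F k : ℝ → ℝ} {a : ℝ}
    (hF : ∀ t ≥ a, DifferentiableAt ℝ F t) (hF' : ∀ t ≥ a, deriv F t ≤ k t)
    (hk : IntegrableOn k (Ici a)) :
    AntitoneOn (fun t => F t + ∫ u in Ioi t, k u) (Ici a) := by
  intro s hs t _ hst
  have hsub : Icc s t ⊆ Ici a := fun u hu => le_trans hs hu.1
  have hincr : F t - F s ≤ ∫ u in s..t, k u :=
    intervalIntegral.sub_le_integral_of_hasDeriv_right_of_le hst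
      (fun u hu => (hF u (hsub hu)).continuousAt.continuousWithinAt)
      (fun u hu => (hF u (hsub (Ioo_subset_Icc_self hu))).hasDerivAt.hasDerivWithinAt)
      (hk.mono_set hsub) (fun u hu => hF' u (hsub (Ioo_subset_Icc_self hu)))
  have hsplit : (∫ u in Ioi s, k u) - ∫ u in Ioi t, k u = ∫ u in s..t, k u :=
    intervalIntegral.integral_Ioi_sub_Ioi (hk.mono_set (Ioi_subset_Ici hs)) hst
  linarith

theorem exists_tendsto_atTop_of_deriv_le_integrable_s10 {F k : ℝ → ℝ} {m : ℝ}
    (hF : ∀ᶠ t in atTop, DifferentiableAt ℝ F t) (hm : ∀ᶠ t in atTop, m ≤ F t)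
    (hF' : ∀ᶠ t in atTop, deriv F t ≤ k t) (hk : IntegrableAtFilter k atTop) :
    ∃ L, Tendsto F atTop (nhds L) := by
  obtain ⟨S, hS, hkS⟩ := hk
  obtain ⟨a, ha⟩ := eventually_atTop.1 ((hF.and hm).and (hF'.and hS))
  have hknorm : IntegrableOn (fun t => ‖k t‖) (Ici a) :=
    (hkS.mono_set fun t ht => (ha t ht).2.2).norm
  have hanti := antitoneOn_Ici_add_integral_Ioi_of_deriv_le (fun t ht => (ha t ht).1.1)
    (fun t ht => (ha t ht).2.1.trans (le_norm_self (k t))) hknorm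
  obtain ⟨L, hL⟩ := exists_tendsto_atTop_of_antitoneOn_Ici_s10 hanti fun t ht =>
    le_add_of_le_of_nonneg (ha t ht).1.2 (integral_nonneg fun u => norm_nonneg (k u))
  have htail : Tendsto (fun t => ∫ u in Ioi t, ‖k u‖) atTop (nhds 0) :=
    tendsto_integral_Ioi_zero tendsto_id
  exact ⟨L - 0, (hL.sub htail).congr fun t => add_sub_cancel_right _ _⟩

theorem tendsto_atBot_of_deriv_le_neg_div {F : ℝ → ℝ} {c : ℝ} (hc : 0 < c)
    (hF : ∀ᶠ t in atTop, DifferentiableAt ℝ F t) (hF' : ∀ᶠ t in atTop, deriv F t ≤ -(c / t)) :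
    Tendsto F atTop atBot := by
  obtain ⟨a, ha⟩ := eventually_atTop.1 ((hF.and hF').and (eventually_gt_atTop 0))
  have hderiv : ∀ t ≥ a, HasDerivAt (fun s => F s + c * log s) (deriv F t + c * t⁻¹) t :=
    fun t ht => (ha t ht).1.1.hasDerivAt.add ((hasDerivAt_log (ha t ht).2.ne').const_mul c)
  have hanti : AntitoneOn (fun s => F s + c * log s) (Ici a) := by
    refine antitoneOn_of_hasDerivWithinAt_nonpos (convex_Ici a)
      (fun t ht => (hderiv t ht).continuousAt.continuousWithinAt)
      (fun t ht => (hderiv t (interior_subset ht)).hasDerivWithinAt) fun t ht => ?_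
    have := (ha t (interior_subset ht)).1.2
    rw [div_eq_mul_inv] at this
    linarith
  refine tendsto_atBot_mono' atTop (f₁ := fun t => F a + c * log a - c * log t) ?_ ?_
  · filter_upwards [eventually_ge_atTop a] with t ht
    exact le_sub_iff_add_le.2 (hanti self_mem_Ici ht ht)
  · exact tendsto_const_nhds.add_atBot
      (tendsto_neg_atTop_atBot.comp (tendsto_log_atTop.const_mul_atTop hc))

theorem exists_tendsto_atTop_of_deriv_nonpos {F : ℝ → ℝ} {m : ℝ}
    (hF : ∀ᶠ t in atTop, DifferentiableAt ℝ F t) (hm : ∀ᶠ t in atTop, m ≤ F t)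
    (hF' : ∀ᶠ t in atTop, deriv F t ≤ 0) : ∃ L, Tendsto F atTop (nhds L) :=
  exists_tendsto_atTop_of_deriv_le_integrable_s10 hF hm hF' ⟨univ, univ_mem, integrableOn_zero⟩

theorem limit_nonpos_of_deriv_le_neg_mul_div {E W : ℝ → ℝ} {κ L L' : ℝ} (hκ : 0 < κ)
    (hE : ∀ᶠ t in atTop, DifferentiableAt ℝ E t)
    (hE' : ∀ᶠ t in atTop, deriv E t ≤ -(κ * (W t / t)))
    (hEL' : Tendsto E atTop (nhds L')) (hWL : Tendsto W atTop (nhds L)) : L ≤ 0 := by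
  by_contra! hL
  refine not_tendsto_nhds_of_tendsto_atBot ?_ L' hEL'
  refine tendsto_atBot_of_deriv_le_neg_div (c := κ * (L / 2)) (by positivity) hE ?_
  filter_upwards [hE', hWL.eventually_const_le (half_lt_self hL), eventually_gt_atTop 0]
    with t hEt hWt htpos
  calc deriv E t ≤ -(κ * (W t / t)) := hEt
    _ ≤ -(κ * (L / 2 / t)) := by gcongr
    _ = -(κ * (L / 2) / t) := by ring

theorem tendsto_zero_of_deriv_le_dissipation {E W D k : ℝ → ℝ} {κ C : ℝ} (hκ : 0 < κ) (hC : 0 ≤ C)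
    (hE : ∀ᶠ t in atTop, DifferentiableAt ℝ E t) (hW : ∀ᶠ t in atTop, DifferentiableAt ℝ W t)
    (hE₀ : ∀ᶠ t in atTop, 0 ≤ E t) (hW₀ : ∀ᶠ t in atTop, 0 ≤ W t)
    (hE' : ∀ᶠ t in atTop, deriv E t ≤ -(κ * D t))
    (hW' : ∀ᶠ t in atTop, deriv W t ≤ C * D t + k t)
    (hWD : ∀ᶠ t in atTop, W t ≤ t * D t) (hk : IntegrableAtFilter k atTop) :
    Tendsto W atTop (nhds 0) := by
  have hE'W : ∀ᶠ t in atTop, deriv E t ≤ -(κ * (W t / t)) := by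
    filter_upwards [hE', hWD, eventually_gt_atTop 0] with t hEt hWt htpos
    have : W t / t ≤ D t := (div_le_iff₀' htpos).2 hWt
    exact hEt.trans (by gcongr)
  obtain ⟨L₁, hL₁⟩ : ∃ L, Tendsto E atTop (nhds L) := by
    refine exists_tendsto_atTop_of_deriv_nonpos hE hE₀ ?_
    filter_upwards [hE'W, hW₀, eventually_gt_atTop 0] with t hEt hWt htpos
    exact hEt.trans (neg_nonpos.2 (by positivity))
  obtain ⟨L₂, hL₂⟩ : ∃ L, Tendsto (fun t => W t + C / κ * E t) atTop (nhds L) := by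
    refine exists_tendsto_atTop_of_deriv_le_integrable_s10 (m := 0) ?_ ?_ ?_ hk
    · filter_upwards [hE, hW] with t hEt hWt using hWt.add (hEt.const_mul _)
    · filter_upwards [hE₀, hW₀] with t hEt hWt
      positivity
    · filter_upwards [hE, hW, hE', hW'] with t hEt hWt hEt' hWt'
      calc deriv (fun t => W t + C / κ * E t) t = deriv W t + C / κ * deriv E t := by
            rw [deriv_fun_add hWt (hEt.const_mul _), deriv_const_mul _ hEt]
        _ ≤ C * D t + k t + C / κ * -(κ * D t) := by gcongr
        _ = k t := by field_simp; ring
  have hWL : Tendsto W atTop (nhds (L₂ - C / κ * L₁)) :=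
    (hL₂.sub (hL₁.const_mul (C / κ))).congr fun t => add_sub_cancel_right _ _
  have hlim : L₂ - C / κ * L₁ = 0 :=
    le_antisymm (limit_nonpos_of_deriv_le_neg_mul_div hκ hE hE'W hL₁ hWL) (ge_of_tendsto hWL hW₀)
  rwa [hlim] at hWL

end Asymptotics

section Energies

variable {H : Type*} [NormedAddCommGroup H] [InnerProductSpace ℝ H]

/-- The weight `w(t) = b(t) - β'(t) - β(t) / t` of the paper; `β'` is meant to be the derivative
of `β`. -/
def reducedWeight (β β' b : ℝ → ℝ) (t : ℝ) : ℝ :=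
  b t - β' t - β t / t

/-- The vector `c (x - z) + t (v + β g)` whose square is the quadratic part of the Lyapunov
function; `g` stands for the gradient of the Moreau envelope along `x`, and `v` for the velocity. -/
def anchoredVelocity (c : ℝ) (z : H) (β : ℝ → ℝ) (x v g : ℝ → H) (t : ℝ) : H :=
  c • (x t - z) + t • (v t + β t • g t)

theorem inner_anchoredVelocity (c d e : ℝ) (z : H) (β : ℝ → ℝ) (x v g : ℝ → H) (t : ℝ) :
    ⟪anchoredVelocity c z β x v g t, d • v t - e • g t⟫
      = c * d * ⟪x t - z, v t⟫ - c * e * ⟪g t, x t - z⟫ + d * (t * ‖v t‖ ^ 2)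
        + t * (d * β t - e) * ⟪g t, v t⟫ - t * β t * e * ‖g t‖ ^ 2 := by
  rw [anchoredVelocity, real_inner_comm (x t - z) (g t), real_inner_comm (v t) (g t)]
  generalize x t - z = y
  simp only [inner_add_left, inner_sub_right, real_inner_smul_left, real_inner_smul_right,
    real_inner_self_eq_norm_sq]
  rw [real_inner_comm (v t) (g t)]
  ring

/-- The Lyapunov function of the dynamics, with `φ` the excess of the Moreau envelope over its
minimum and `δ` a free parameter that tunes the anchoring strength `c = α - 1 - δ`. -/
def lyapunovEnergy (α δ : ℝ) (z : H) (β β' b φ : ℝ → ℝ) (x v g : ℝ → H) (t : ℝ) : ℝ :=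
  (t ^ 2 * reducedWeight β β' b t + δ * (t * β t)) * φ t
    + ‖anchoredVelocity (α - 1 - δ) z β x v g t‖ ^ 2 / 2
    + (α - 1 - δ) * δ / 2 * ‖x t - z‖ ^ 2

/-- The mechanical energy `‖v‖² / 2 + b φ`, multiplied by `t²`. -/
def scaledMechanicalEnergy (b φ : ℝ → ℝ) (v : ℝ → H) (t : ℝ) : ℝ :=
  t ^ 2 * (‖v t‖ ^ 2 / 2 + b t * φ t)

/-- The quantity that the Lyapunov function dissipates, up to a constant factor. -/
def dissipation (b φ : ℝ → ℝ) (v : ℝ → H) (t : ℝ) : ℝ :=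
  t * (‖v t‖ ^ 2 + b t * φ t)

/-- The integrand, before taking the positive part, of the integrability condition on the
coefficients; `lam'` is meant to be the derivative of `lam`. -/
def parameterDrift (β b lam lam' : ℝ → ℝ) (t : ℝ) : ℝ :=
  lam' t ^ 2 * t ^ 3 * β t ^ 2 / lam t ^ 4 - lam' t * t ^ 2 * b t / (2 * lam t ^ 2)

theorem integrableOn_max_parameterDrift_zero {t₀ : ℝ} {β b lam lam' : ℝ → ℝ}
    (hβ : ContinuousOn β (Ici t₀)) (hb : ContinuousOn b (Ici t₀))
    (hlam' : ∀ t ≥ t₀, HasDerivAt lam (lam' t) t)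
    (hfinite : ∫⁻ t in Ici t₀, ENNReal.ofReal (parameterDrift β b lam lam' t) < ⊤) :
    IntegrableOn (fun t => max (parameterDrift β b lam lam' t) 0) (Ici t₀) := by
  have hβm : AEMeasurable β (volume.restrict (Ici t₀)) := hβ.aemeasurable measurableSet_Ici
  have hbm : AEMeasurable b (volume.restrict (Ici t₀)) := hb.aemeasurable measurableSet_Ici
  have hlamm : AEMeasurable lam (volume.restrict (Ici t₀)) :=
    (HasDerivAt.continuousOn hlam').aemeasurable measurableSet_Ici
  have hlam'm : AEMeasurable lam' (volume.restrict (Ici t₀)) := by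
    refine (measurable_deriv lam).aemeasurable.congr ?_
    filter_upwards [ae_restrict_mem measurableSet_Ici] with t ht using (hlam' t ht).deriv
  have hmeas : AEMeasurable (fun t => max (parameterDrift β b lam lam' t) 0)
      (volume.restrict (Ici t₀)) := by
    unfold parameterDrift
    fun_prop
  refine ⟨hmeas.aestronglyMeasurable, ?_⟩
  refine (hasFiniteIntegral_iff_ofReal (Eventually.of_forall fun t => le_max_right _ 0)).2 ?_
  simpa only [ENNReal.ofReal_max, ENNReal.ofReal_zero, max_eq_left zero_le] using hfinite

/-- A curve `x` with velocity `v` solving `ẍ + (α / t) ẋ + β ġ + b g = 0` on `(t₀, ∞)`, where `g`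
and `φ` satisfy the relations that hold between the gradient and the excess over the minimum at
`x t` of the Moreau envelope, with nondecreasing parameter `lam t`, of a convex function minimized
at `z`. The functions `β'`, `lam'` and `g'` are the derivatives of `β`, `lam` and `g`. -/
structure IsEnvelopeFlow (t₀ α : ℝ) (z : H) (β β' b lam lam' φ : ℝ → ℝ) (x v g g' : ℝ → H) :
    Prop where
  nonneg_start : 0 ≤ t₀
  hasDerivAt_β : ∀ t > t₀, HasDerivAt β (β' t) t
  hasDerivAt_x : ∀ t > t₀, HasDerivAt x (v t) t
  hasDerivAt_v : ∀ t > t₀, HasDerivAt v (-((α / t) • v t + β t • g' t + b t • g t)) t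
  hasDerivAt_g : ∀ t > t₀, HasDerivAt g (g' t) t
  hasDerivAt_φ : ∀ t > t₀, HasDerivAt φ (⟪g t, v t⟫ - lam' t / 2 * ‖g t‖ ^ 2) t
  β_nonneg : ∀ t > t₀, 0 ≤ β t
  b_nonneg : ∀ t > t₀, 0 ≤ b t
  lam_pos : ∀ t > t₀, 0 < lam t
  lam'_nonneg : ∀ t > t₀, 0 ≤ lam' t
  φ_nonneg : ∀ t > t₀, 0 ≤ φ t
  φ_le_inner : ∀ t > t₀, φ t ≤ ⟪g t, x t - z⟫
  lam_mul_norm_le : ∀ t > t₀, lam t * ‖g t‖ ≤ ‖x t - z‖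
  inner_nonneg : ∀ t > t₀, 0 ≤ ⟪g' t, v t - lam' t • g t - lam t • g' t⟫

namespace IsEnvelopeFlow

variable {t₀ α : ℝ} {z : H} {β β' b b' lam lam' φ w' : ℝ → ℝ} {x v g g' : ℝ → H}
variable {t δ C M : ℝ}

theorem time_pos (h : IsEnvelopeFlow t₀ α z β β' b lam lam' φ x v g g') (ht : t₀ < t) : 0 < t :=
  h.nonneg_start.trans_lt ht

theorem hasDerivAt_anchoredVelocity (h : IsEnvelopeFlow t₀ α z β β' b lam lam' φ x v g g')
    (c : ℝ) (ht : t₀ < t) :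
    HasDerivAt (anchoredVelocity c z β x v g)
      ((c + 1 - α) • v t - (t * reducedWeight β β' b t) • g t) t := by
  have htpos := h.time_pos ht
  refine (((h.hasDerivAt_x t ht).sub_const z).fun_const_smul c |>.fun_add
    ((hasDerivAt_id' t).fun_smul ((h.hasDerivAt_v t ht).fun_add
      ((h.hasDerivAt_β t ht).fun_smul (h.hasDerivAt_g t ht))))).congr_deriv ?_
  rw [reducedWeight]
  match_scalars <;> field_simp <;> ring

theorem hasDerivAt_lyapunovEnergy (h : IsEnvelopeFlow t₀ α z β β' b lam lam' φ x v g g')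
    (δ : ℝ) (hw' : HasDerivAt (reducedWeight β β' b) (w' t) t) (ht : t₀ < t) :
    HasDerivAt (lyapunovEnergy α δ z β β' b φ x v g)
      (((2 - δ) * reducedWeight β β' b t + t * w' t + δ * b t) * (t * φ t)
        - (α - 1 - δ) * (t * reducedWeight β β' b t) * ⟪g t, x t - z⟫
        - δ * (t * ‖v t‖ ^ 2)
        - (t ^ 2 * reducedWeight β β' b t + δ * (t * β t)) * (lam' t / 2) * ‖g t‖ ^ 2
        - t ^ 2 * β t * reducedWeight β β' b t * ‖g t‖ ^ 2) t := by
  have htpos := h.time_pos ht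
  have hcoeff : HasDerivAt (fun s => s ^ 2 * reducedWeight β β' b s + δ * (s * β s))
      (((2 - δ) * reducedWeight β β' b t + t * w' t + δ * b t) * t) t := by
    refine ((((hasDerivAt_id' t).fun_pow 2).fun_mul hw').fun_add
      (((hasDerivAt_id' t).fun_mul (h.hasDerivAt_β t ht)).const_mul δ)).congr_deriv ?_
    rw [reducedWeight]
    push_cast
    field_simp
    ring
  refine (((hcoeff.fun_mul (h.hasDerivAt_φ t ht)).fun_add
    ((h.hasDerivAt_anchoredVelocity (α - 1 - δ) ht).norm_sq.div_const 2)).fun_add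
      (((h.hasDerivAt_x t ht).sub_const z).norm_sq.const_mul _)).congr_deriv ?_
  rw [inner_anchoredVelocity]
  ring

theorem deriv_lyapunovEnergy_le (h : IsEnvelopeFlow t₀ α z β β' b lam lam' φ x v g g')
    (hδ₀ : 0 ≤ δ) (hδ : δ ≤ α - 1) (hw' : HasDerivAt (reducedWeight β β' b) (w' t) t)
    (hw₀ : 0 ≤ reducedWeight β β' b t)
    (hgrowth : 2 * δ * b t ≤ (α - 3) * reducedWeight β β' b t - t * w' t) (ht : t₀ < t) :
    deriv (lyapunovEnergy α δ z β β' b φ x v g) t ≤ -(δ * dissipation b φ v t) := by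
  have htpos := h.time_pos ht
  have hβ := h.β_nonneg t ht
  have hlam' := h.lam'_nonneg t ht
  have hφ := h.φ_nonneg t ht
  have : 0 ≤ α - 1 - δ := sub_nonneg.2 hδ
  have hconvex : (α - 1 - δ) * (t * reducedWeight β β' b t) * φ t
      ≤ (α - 1 - δ) * (t * reducedWeight β β' b t) * ⟪g t, x t - z⟫ := by
    gcongr
    exact h.φ_le_inner t ht
  have hdrift :
      0 ≤ (t ^ 2 * reducedWeight β β' b t + δ * (t * β t)) * (lam' t / 2) * ‖g t‖ ^ 2 := by
    positivity
  have hhessian : 0 ≤ t ^ 2 * β t * reducedWeight β β' b t * ‖g t‖ ^ 2 := by positivity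
  have hpotential := mul_le_mul_of_nonneg_right hgrowth (mul_nonneg htpos.le hφ)
  rw [(h.hasDerivAt_lyapunovEnergy δ hw' ht).deriv, dissipation]
  linarith

theorem norm_sq_le_lyapunovEnergy (h : IsEnvelopeFlow t₀ α z β β' b lam lam' φ x v g g')
    (hδ₀ : 0 ≤ δ) (hw₀ : 0 ≤ reducedWeight β β' b t) (ht : t₀ < t) :
    (α - 1 - δ) * δ / 2 * ‖x t - z‖ ^ 2 ≤ lyapunovEnergy α δ z β β' b φ x v g t := by
  have htpos := h.time_pos ht
  have hβ := h.β_nonneg t ht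
  have hφ := h.φ_nonneg t ht
  exact le_add_of_nonneg_left (by positivity)

theorem dissipation_nonneg (h : IsEnvelopeFlow t₀ α z β β' b lam lam' φ x v g g')
    (ht : t₀ < t) : 0 ≤ dissipation b φ v t := by
  have htpos := h.time_pos ht
  have hb := h.b_nonneg t ht
  have hφ := h.φ_nonneg t ht
  rw [dissipation]
  positivity

theorem norm_sq_le_scaledMechanicalEnergy
    (h : IsEnvelopeFlow t₀ α z β β' b lam lam' φ x v g g') (ht : t₀ < t) :
    (t * ‖v t‖) ^ 2 / 2 ≤ scaledMechanicalEnergy b φ v t := by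
  have hpotential : 0 ≤ t ^ 2 * (b t * φ t) :=
    mul_nonneg (sq_nonneg t) (mul_nonneg (h.b_nonneg t ht) (h.φ_nonneg t ht))
  rw [scaledMechanicalEnergy]
  linarith

theorem hasDerivAt_scaledMechanicalEnergy
    (h : IsEnvelopeFlow t₀ α z β β' b lam lam' φ x v g g') (hb' : HasDerivAt b (b' t) t)
    (ht : t₀ < t) :
    HasDerivAt (scaledMechanicalEnergy b φ v)
      ((1 - α) * (t * ‖v t‖ ^ 2) - t ^ 2 * β t * ⟪g' t, v t⟫
        + (2 * t * b t + t ^ 2 * b' t) * φ t - t ^ 2 * b t * (lam' t / 2) * ‖g t‖ ^ 2) t := by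
  have htpos := h.time_pos ht
  have hpower : ⟪v t, -((α / t) • v t + β t • g' t + b t • g t)⟫
      = -(α / t * ‖v t‖ ^ 2 + β t * ⟪g' t, v t⟫ + b t * ⟪g t, v t⟫) := by
    rw [inner_neg_right, inner_add_right, inner_add_right, real_inner_smul_right,
      real_inner_smul_right, real_inner_smul_right, real_inner_self_eq_norm_sq,
      real_inner_comm (g' t), real_inner_comm (g t)]
  refine (((hasDerivAt_id' t).fun_pow 2).fun_mul
    (((h.hasDerivAt_v t ht).norm_sq.div_const 2).fun_add
      (hb'.fun_mul (h.hasDerivAt_φ t ht)))).congr_deriv ?_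
  rw [hpower]
  push_cast
  field_simp
  ring

theorem neg_inner_sub_le_parameterDrift
    (h : IsEnvelopeFlow t₀ α z β β' b lam lam' φ x v g g') (ht : t₀ < t) :
    -(t ^ 2 * β t * ⟪g' t, v t⟫) - t ^ 2 * b t * (lam' t / 2) * ‖g t‖ ^ 2
      ≤ t * ‖v t‖ ^ 2 / 4 + (lam t * ‖g t‖) ^ 2 * parameterDrift β b lam lam' t := by
  have htpos := h.time_pos ht
  have hβ := h.β_nonneg t ht
  have hlam := h.lam_pos t ht
  have hcross : t ^ 2 * β t * -⟪g' t, v t⟫ ≤ t ^ 2 * β t * (lam' t / lam t * ‖g t‖ * ‖v t‖) := by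
    gcongr
    exact neg_inner_le_of_inner_sub_nonneg hlam (h.lam'_nonneg t ht) (h.inner_nonneg t ht)
  have hyoung : 0 ≤ t * (t * β t * (lam' t / lam t) * ‖g t‖ - ‖v t‖ / 2) ^ 2 := by positivity
  have hdrift : (lam t * ‖g t‖) ^ 2 * parameterDrift β b lam lam' t
      = t * (t * β t * (lam' t / lam t) * ‖g t‖) ^ 2
        - t ^ 2 * b t * (lam' t / 2) * ‖g t‖ ^ 2 := by
    rw [parameterDrift]
    field_simp
  rw [hdrift]
  linarith

theorem deriv_scaledMechanicalEnergy_le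
    (h : IsEnvelopeFlow t₀ α z β β' b lam lam' φ x v g g') (hα : 1 ≤ α) (hC : 0 ≤ C)
    (hb' : HasDerivAt b (b' t) t) (hgrowth : 2 * t * b t + t ^ 2 * b' t ≤ C * (t * b t))
    (hM : ‖x t - z‖ ≤ M) (ht : t₀ < t) :
    deriv (scaledMechanicalEnergy b φ v) t
      ≤ (C + 1) * dissipation b φ v t + M ^ 2 * max (parameterDrift β b lam lam' t) 0 := by
  have htpos := h.time_pos ht
  have hb := h.b_nonneg t ht
  have hφ := h.φ_nonneg t ht
  have hlam := h.lam_pos t ht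
  have hdrift : (lam t * ‖g t‖) ^ 2 * parameterDrift β b lam lam' t
      ≤ M ^ 2 * max (parameterDrift β b lam lam' t) 0 := by
    calc (lam t * ‖g t‖) ^ 2 * parameterDrift β b lam lam' t
        ≤ (lam t * ‖g t‖) ^ 2 * max (parameterDrift β b lam lam' t) 0 := by
          gcongr
          exact le_max_left _ _
      _ ≤ M ^ 2 * max (parameterDrift β b lam lam' t) 0 := by
          gcongr
          exact (h.lam_mul_norm_le t ht).trans hM
  have hpotential : (2 * t * b t + t ^ 2 * b' t) * φ t ≤ C * (t * b t) * φ t := by gcongr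
  have hkinetic : 0 ≤ (C + (α - 1) + 3 / 4) * (t * ‖v t‖ ^ 2) := by
    have : 0 ≤ α - 1 := sub_nonneg.2 hα
    positivity
  have hnonneg : 0 ≤ t * (b t * φ t) := by positivity
  rw [(h.hasDerivAt_scaledMechanicalEnergy hb' ht).deriv, dissipation]
  linarith [h.neg_inner_sub_le_parameterDrift ht]

theorem exists_eventually_norm_sub_le (h : IsEnvelopeFlow t₀ α z β β' b lam lam' φ x v g g')
    (hδ₀ : 0 < δ) (hδ : δ < α - 1) (hw' : ∀ t > t₀, HasDerivAt (reducedWeight β β' b) (w' t) t)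
    (hw₀ : ∀ t > t₀, 0 ≤ reducedWeight β β' b t)
    (hgrowth : ∀ t > t₀, 2 * δ * b t ≤ (α - 3) * reducedWeight β β' b t - t * w' t) :
    ∃ M, ∀ᶠ t in atTop, ‖x t - z‖ ≤ M := by
  have hc : 0 < (α - 1 - δ) * δ / 2 := half_pos (mul_pos (sub_pos.2 hδ) hδ₀)
  have hlower : ∀ t > t₀, (α - 1 - δ) * δ / 2 * ‖x t - z‖ ^ 2
      ≤ lyapunovEnergy α δ z β β' b φ x v g t :=
    fun t ht => h.norm_sq_le_lyapunovEnergy hδ₀.le (hw₀ t ht) ht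
  obtain ⟨L, hL⟩ : ∃ L, Tendsto (lyapunovEnergy α δ z β β' b φ x v g) atTop (nhds L) := by
    refine exists_tendsto_atTop_of_deriv_nonpos (m := 0) ?_ ?_ ?_ <;>
      filter_upwards [eventually_gt_atTop t₀] with t ht
    · exact (h.hasDerivAt_lyapunovEnergy δ (hw' t ht) ht).differentiableAt
    · exact le_trans (by positivity) (hlower t ht)
    · exact (h.deriv_lyapunovEnergy_le hδ₀.le hδ.le (hw' t ht) (hw₀ t ht) (hgrowth t ht) ht).trans
        (neg_nonpos.2 (mul_nonneg hδ₀.le (h.dissipation_nonneg ht)))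
  refine ⟨√((L + 1) / ((α - 1 - δ) * δ / 2)), ?_⟩
  filter_upwards [hL.eventually_le_const (lt_add_one L), eventually_gt_atTop t₀] with t hEt ht
  exact le_sqrt_of_sq_le ((le_div_iff₀' hc).2 ((hlower t ht).trans hEt))

theorem tendsto_scaledMechanicalEnergy (h : IsEnvelopeFlow t₀ α z β β' b lam lam' φ x v g g')
    (hδ₀ : 0 < δ) (hδ : δ < α - 1) (hC : 0 ≤ C)
    (hb' : ∀ t > t₀, HasDerivAt b (b' t) t)
    (hw' : ∀ t > t₀, HasDerivAt (reducedWeight β β' b) (w' t) t)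
    (hw₀ : ∀ t > t₀, 0 ≤ reducedWeight β β' b t)
    (hgrowth : ∀ t > t₀, 2 * δ * b t ≤ (α - 3) * reducedWeight β β' b t - t * w' t)
    (hb_growth : ∀ t > t₀, 2 * t * b t + t ^ 2 * b' t ≤ C * (t * b t))
    (hdrift : IntegrableAtFilter (fun t => max (parameterDrift β b lam lam' t) 0) atTop) :
    Tendsto (scaledMechanicalEnergy b φ v) atTop (nhds 0) := by
  obtain ⟨M, hM⟩ := h.exists_eventually_norm_sub_le hδ₀ hδ hw' hw₀ hgrowth
  have hα : 1 ≤ α := by linarith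
  have : 0 ≤ α - 1 - δ := sub_nonneg.2 hδ.le
  refine tendsto_zero_of_deriv_le_dissipation (E := lyapunovEnergy α δ z β β' b φ x v g)
    (D := dissipation b φ v) hδ₀ (add_nonneg hC zero_le_one) ?_ ?_ ?_ ?_ ?_ ?_ ?_
    (hdrift.smul (M ^ 2)) <;>
    filter_upwards [eventually_gt_atTop t₀, hM] with t ht hMt
  · exact (h.hasDerivAt_lyapunovEnergy δ (hw' t ht) ht).differentiableAt
  · exact (h.hasDerivAt_scaledMechanicalEnergy (hb' t ht) ht).differentiableAt
  · exact le_trans (by positivity) (h.norm_sq_le_lyapunovEnergy hδ₀.le (hw₀ t ht) ht)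
  · exact le_trans (by positivity) (h.norm_sq_le_scaledMechanicalEnergy ht)
  · exact h.deriv_lyapunovEnergy_le hδ₀.le hδ.le (hw' t ht) (hw₀ t ht) (hgrowth t ht) ht
  · exact h.deriv_scaledMechanicalEnergy_le hα hC (hb' t ht) (hb_growth t ht) hMt ht
  · rw [scaledMechanicalEnergy, dissipation]
    linarith [mul_nonneg (sq_nonneg t) (sq_nonneg ‖v t‖)]

theorem tendsto_mul_norm_velocity (h : IsEnvelopeFlow t₀ α z β β' b lam lam' φ x v g g')
    (hW : Tendsto (scaledMechanicalEnergy b φ v) atTop (nhds 0)) :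
    Tendsto (fun t => t * ‖v t‖) atTop (nhds 0) := by
  have hsqrt : Tendsto (fun t => √(2 * scaledMechanicalEnergy b φ v t)) atTop (nhds 0) := by
    simpa using (hW.const_mul 2).sqrt
  refine squeeze_zero' ?_ ?_ hsqrt <;> filter_upwards [eventually_gt_atTop t₀] with t ht
  · exact mul_nonneg (h.time_pos ht).le (norm_nonneg _)
  · exact le_sqrt_of_sq_le (by linarith [h.norm_sq_le_scaledMechanicalEnergy ht])

theorem of_isProxPt {Φ : H → EReal} (hbot : ∀ y, Φ y ≠ ⊥) (hconv : EConvexOn Φ)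
    {z : H} (hz_top : Φ z ≠ ⊤) (hz : ∀ y, Φ z ≤ Φ y) {t₀ α : ℝ} (ht₀ : 0 ≤ t₀)
    {β β' b lam lam' : ℝ → ℝ} {x v acc p g' : ℝ → H}
    (hβ_nonneg : ∀ t > t₀, 0 ≤ β t) (hb_nonneg : ∀ t > t₀, 0 ≤ b t)
    (hlam_pos : ∀ t > t₀, 0 < lam t) (hlam'_nonneg : ∀ t > t₀, 0 ≤ lam' t)
    (hβ' : ∀ t > t₀, HasDerivAt β (β' t) t) (hlam' : ∀ t > t₀, HasDerivAt lam (lam' t) t)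
    (hx : ∀ t > t₀, HasDerivAt x (v t) t) (hv : ∀ t > t₀, HasDerivAt v (acc t) t)
    (hp : ∀ t > t₀, IsProxPt Φ (lam t) (x t) (p t))
    (hg' : ∀ t > t₀, HasDerivAt (fun s => (lam s)⁻¹ • (x s - p s)) (g' t) t)
    (hode : ∀ t > t₀, acc t + (α / t) • v t + β t • g' t
        + b t • ((lam t)⁻¹ • (x t - p t)) = 0) :
    IsEnvelopeFlow t₀ α z β β' b lam lam' (fun t => moreau Φ (lam t) (x t) - (Φ z).toReal) x v
      (fun s => (lam s)⁻¹ • (x s - p s)) g' := by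
  have hnear : ∀ t > t₀, ∀ᶠ s in nhds t, t₀ < s := fun t ht => Ioi_mem_nhds ht
  have hp' : ∀ t > t₀,
      HasDerivAt p (v t - lam' t • ((lam t)⁻¹ • (x t - p t)) - lam t • g' t) t := fun t ht =>
    hasDerivAt_of_hasDerivAt_inv_smul_sub ((hnear t ht).mono fun s hs => (hlam_pos s hs).ne')
      (hlam' t ht) (hx t ht) (hg' t ht)
  exact {
    nonneg_start := ht₀
    hasDerivAt_β := hβ'
    hasDerivAt_x := hx
    hasDerivAt_v := fun t ht => (hv t ht).congr_deriv <| by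
      rw [eq_neg_iff_add_eq_zero, ← hode t ht]
      abel
    hasDerivAt_g := hg'
    hasDerivAt_φ := fun t ht => (hasDerivAt_moreau hbot hz_top (hlam_pos t ht).ne'
      ((hnear t ht).mono hp) (hlam' t ht) (hx t ht) (hp' t ht)).sub_const _
    β_nonneg := hβ_nonneg
    b_nonneg := hb_nonneg
    lam_pos := hlam_pos
    lam'_nonneg := hlam'_nonneg
    φ_nonneg := fun t ht =>
      sub_nonneg.2 ((hp t ht).toReal_le_moreau (hlam_pos t ht).le hbot hz_top hz)
    φ_le_inner := fun t ht => (hp t ht).moreau_sub_toReal_le_inner (hlam_pos t ht) hbot hconv hz_top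
    lam_mul_norm_le := fun t ht => by
      have hlam := hlam_pos t ht
      rw [norm_smul, norm_inv, Real.norm_of_nonneg hlam.le, mul_inv_cancel_left₀ hlam.ne']
      exact (hp t ht).norm_sub_le hlam hbot hz_top hz
    inner_nonneg := fun t ht => inner_hasDerivAt_proxGradient_nonneg hbot hconv hz_top
      ((hnear t ht).mono hlam_pos) ((hnear t ht).mono hp) (hg' t ht) (hp' t ht) }

end IsEnvelopeFlow

end Energies

theorem velocity_little_o_general
    {H : Type*} [NormedAddCommGroup H] [InnerProductSpace ℝ H]
    (Φ : H → EReal)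
    (hΦbot : ∀ y, Φ y ≠ ⊥) (hΦproper : ∃ y, Φ y ≠ ⊤)
    (hΦconv : EConvexOn Φ)
    (t₀ α : ℝ) (ht₀ : 0 < t₀)
    (β b lam β' b' lam' w' : ℝ → ℝ)
    (hβnonneg : ∀ t ≥ t₀, 0 ≤ β t)
    (hbpos : ∀ t ≥ t₀, 0 < b t)
    (hlampos : ∀ t ≥ t₀, 0 < lam t)
    (hβ' : ∀ t ≥ t₀, HasDerivAt β (β' t) t)
    (hb' : ∀ t ≥ t₀, HasDerivAt b (b' t) t)
    (hlam' : ∀ t ≥ t₀, HasDerivAt lam (lam' t) t)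
    (hw' : ∀ t ≥ t₀, HasDerivAt (reducedWeight β β' b) (w' t) t)
    (x v acc p G' : ℝ → H)
    (hx : ∀ t ≥ t₀, HasDerivAt x (v t) t)
    (hv : ∀ t ≥ t₀, HasDerivAt v (acc t) t)
    (hp : ∀ t ≥ t₀, IsProxPt Φ (lam t) (x t) (p t))
    (hG' : ∀ t ≥ t₀, HasDerivAt (fun s => (lam s)⁻¹ • (x s - p s)) (G' t) t)
    (hode : ∀ t ≥ t₀, acc t + (α / t) • v t + β t • G' t
        + b t • ((lam t)⁻¹ • (x t - p t)) = 0)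
    (hlammono : MonotoneOn lam (Ici t₀))
    (hw : ∀ t ≥ t₀, β' t + β t / t < b t)
    (hAs2 : ∃ ε, 0 < ε ∧ ε < α - 1 ∧
      ∀ t ≥ t₀, ε * b t ≤ (α - 3) * reducedWeight β β' b t - t * w' t)
    (hAs4 : ∫⁻ t in Ici t₀, ENNReal.ofReal (parameterDrift β b lam lam' t) < ⊤)
    (hAs : ∃ C > (0 : ℝ), ∀ t ≥ t₀, 2 * t * b t + t ^ 2 * b' t ≤ C * (t * b t))
    (hargmin : ∃ z, ∀ y, Φ z ≤ Φ y) :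
    Tendsto (fun t => t * ‖v t‖) atTop (nhds 0) := by
  obtain ⟨ε, hε₀, hε, hgrowth⟩ := hAs2
  obtain ⟨C, hC, hb_growth⟩ := hAs
  obtain ⟨z, hz⟩ := hargmin
  obtain ⟨y, hy⟩ := hΦproper
  have flow := IsEnvelopeFlow.of_isProxPt hΦbot hΦconv (ne_top_of_le_ne_top hy (hz y)) hz ht₀.le
    (fun t ht => hβnonneg t ht.le) (fun t ht => (hbpos t ht.le).le) (fun t ht => hlampos t ht.le)
    (fun t ht => nonneg_of_hasDerivAt_of_monotoneOn_Ici hlammono (hlam' t ht.le) ht.le)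
    (fun t ht => hβ' t ht.le) (fun t ht => hlam' t ht.le) (fun t ht => hx t ht.le)
    (fun t ht => hv t ht.le) (fun t ht => hp t ht.le) (fun t ht => hG' t ht.le)
    (fun t ht => hode t ht.le)
  have hdrift := integrableOn_max_parameterDrift_zero (HasDerivAt.continuousOn hβ')
    (HasDerivAt.continuousOn hb') hlam' hAs4
  refine flow.tendsto_mul_norm_velocity (flow.tendsto_scaledMechanicalEnergy (half_pos hε₀)
    (by linarith) hC.le (fun t ht => hb' t ht.le) (fun t ht => hw' t ht.le) (fun t ht => ?_)
    (fun t ht => ?_) (fun t ht => hb_growth t ht.le) ⟨Ici t₀, Ici_mem_atTop t₀, hdrift⟩)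
  · rw [reducedWeight]
    linarith [hw t ht.le]
  · linarith [hgrowth t ht.le]

theorem velocity_little_o
    {H : Type*} [NormedAddCommGroup H] [InnerProductSpace ℝ H] [CompleteSpace H]
    (Φ : H → EReal)
    (hΦbot : ∀ y, Φ y ≠ ⊥) (hΦproper : ∃ y, Φ y ≠ ⊤)
    (hΦconv : EConvexOn Φ) (hΦlsc : LowerSemicontinuous Φ)
    (t₀ α : ℝ) (ht₀ : 0 < t₀)
    (β b lam β' b' lam' w' : ℝ → ℝ)
    (hβnonneg : ∀ t ≥ t₀, 0 ≤ β t)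
    (hbpos : ∀ t ≥ t₀, 0 < b t)
    (hlampos : ∀ t ≥ t₀, 0 < lam t)
    (hβ' : ∀ t ≥ t₀, HasDerivAt β (β' t) t)
    (hb' : ∀ t ≥ t₀, HasDerivAt b (b' t) t)
    (hlam' : ∀ t ≥ t₀, HasDerivAt lam (lam' t) t)
    (hw' : ∀ t ≥ t₀, HasDerivAt (fun s => b s - β' s - β s / s) (w' t) t)
    (x v acc p G' : ℝ → H)
    (hx : ∀ t ≥ t₀, HasDerivAt x (v t) t)
    (hv : ∀ t ≥ t₀, HasDerivAt v (acc t) t)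
    (hp : ∀ t ≥ t₀, IsProxPt Φ (lam t) (x t) (p t))
    (hG' : ∀ t ≥ t₀, HasDerivAt (fun s => (lam s)⁻¹ • (x s - p s)) (G' t) t)
    (hode : ∀ t ≥ t₀, acc t + (α / t) • v t + β t • G' t
        + b t • ((lam t)⁻¹ • (x t - p t)) = 0)
    (hα : 1 < α)
    (hlammono : MonotoneOn lam (Set.Ici t₀))
    (hβmono : MonotoneOn β (Set.Ici t₀))
    (hw : ∀ t ≥ t₀, β' t + β t / t < b t)
    (hAs2 : ∃ ε, 0 < ε ∧ ε < α - 1 ∧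
      ∀ t ≥ t₀, ε * b t ≤ (α - 3) * (b t - β' t - β t / t) - t * w' t)
    (hAs4 : ∫⁻ t in Set.Ici t₀, ENNReal.ofReal ((lam' t) ^ 2 * t ^ 3 * (β t) ^ 2 / (lam t) ^ 4
      - lam' t * t ^ 2 * b t / (2 * (lam t) ^ 2)) < ⊤)
    (hAs : ∃ C > (0 : ℝ), ∀ t ≥ t₀, 2 * t * b t + t ^ 2 * b' t ≤ C * (t * b t))
    (hargmin : ∃ z, ∀ y, Φ z ≤ Φ y)
    :
    Filter.Tendsto (fun t => t * ‖v t‖) Filter.atTop (nhds 0) := by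
  exact velocity_little_o_general Φ hΦbot hΦproper hΦconv t₀ α ht₀ β b lam β' b' lam' w' hβnonneg
    hbpos hlampos hβ' hb' hlam' hw' x v acc p G' hx hv hp hG' hode hlammono hw hAs2 hAs4 hAs hargmin
end
end
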